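/- arXiv:0912.0904 — 7 statements merged into one kernel-verified Lean document; each statement's English description precedes it below -/
import Mathlib

section
/- Let n ≥ 2, let k₁, …, kₙ be positive reals, and define N : ℂⁿ → ℝ by N(z) = π·Σ_{j=2}^{n} kⱼ|zⱼ|². Let a, b be positive reals with a + b = k₁, and let α > 0 and s > 0 satisfy s·k₁² < a·b·α. Let E := {z ∈ ℂⁿ : π·k₁|z₁|² + N(z) < α} (an open ellipsoid). Then there exist a smooth time-dependent function G : ℝ × ℂⁿ → ℝ and a compact set K ⊆ E with G t = 0 outside K for every t, together with a Hamiltonian flow b of G with b 0 = id, such that: (i) N(b t z) = N(z) for all t and z; and (ii) the image under b 1 of the set {z ∈ E : π·a|z₁|² + N(z) < s} is disjoint from the set {z ∈ E : π·b|z₁|² < s}. -/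
open Real

noncomputable def dispG (ε c x : ℝ) : ℝ := (c - x ^ 2 + √((c - x ^ 2) ^ 2 + ε ^ 2)) / 2
noncomputable def dispH (ε c x : ℝ) : ℝ := √(dispG ε c x)
noncomputable def dispJ (ε c x : ℝ) : ℝ := ∫ u in (0 : ℝ)..x, dispH ε c u

lemma dispG_pos {ε : ℝ} (hε : 0 < ε) (c x : ℝ) : 0 < dispG ε c x := by
  unfold dispG
  have h : |c - x ^ 2| < √((c - x ^ 2) ^ 2 + ε ^ 2) := by
    rw [← Real.sqrt_sq_eq_abs]
    apply Real.sqrt_lt_sqrt (sq_nonneg _)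
    have := sq_pos_of_pos hε
    linarith
  have := neg_abs_le (c - x ^ 2)
  linarith

lemma dispG_ge (ε c x : ℝ) : c - x ^ 2 ≤ dispG ε c x := by
  unfold dispG
  have h : |c - x ^ 2| ≤ √((c - x ^ 2) ^ 2 + ε ^ 2) := by
    rw [← Real.sqrt_sq_eq_abs]
    apply Real.sqrt_le_sqrt
    nlinarith [sq_nonneg ε]
  have := le_abs_self (c - x ^ 2)
  linarith

lemma dispG_le {ε : ℝ} (hε : 0 < ε) (c x : ℝ) : dispG ε c x ≤ max (c - x ^ 2) 0 + ε / 2 := by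
  unfold dispG
  have h : √((c - x ^ 2) ^ 2 + ε ^ 2) ≤ |c - x ^ 2| + ε := by
    rw [Real.sqrt_le_left (by positivity)]
    have := abs_nonneg (c - x ^ 2)
    nlinarith [sq_abs (c - x ^ 2)]
  rcases le_total (c - x ^ 2) 0 with h0 | h0
  · rw [max_eq_right h0]; rw [abs_of_nonpos h0] at h; linarith
  · rw [max_eq_left h0]; rw [abs_of_nonneg h0] at h; linarith

lemma dispG_mono {ε : ℝ} (hε : 0 < ε) {c C : ℝ} (h : c ≤ C) (x : ℝ) :
    dispG ε c x ≤ dispG ε C x := by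
  unfold dispG
  set s := c - x ^ 2
  set t := C - x ^ 2
  have hst : s ≤ t := by simp only [s, t]; linarith
  suffices √(s ^ 2 + ε ^ 2) ≤ √(t ^ 2 + ε ^ 2) + (t - s) by linarith
  rw [Real.sqrt_le_left (by positivity)]
  have h1 := Real.sq_sqrt (show 0 ≤ t ^ 2 + ε ^ 2 by positivity)
  have h2 : -t ≤ √(t ^ 2 + ε ^ 2) := by
    have : |t| ≤ √(t ^ 2 + ε ^ 2) := by
      rw [← Real.sqrt_sq_eq_abs]
      apply Real.sqrt_le_sqrt
      nlinarith [sq_nonneg ε]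
    linarith [neg_abs_le t]
  nlinarith [mul_nonneg (sub_nonneg.2 hst) (by linarith : 0 ≤ √(t ^ 2 + ε ^ 2) + t)]

lemma dispH_pos {ε : ℝ} (hε : 0 < ε) (c x : ℝ) : 0 < dispH ε c x :=
  Real.sqrt_pos.2 (dispG_pos hε c x)

lemma dispH_sq {ε : ℝ} (hε : 0 < ε) (c x : ℝ) : dispH ε c x ^ 2 = dispG ε c x :=
  Real.sq_sqrt (dispG_pos hε c x).le

lemma dispH_mono {ε : ℝ} (hε : 0 < ε) {c C : ℝ} (h : c ≤ C) (x : ℝ) :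
    dispH ε c x ≤ dispH ε C x := Real.sqrt_le_sqrt (dispG_mono hε h x)

lemma dispH_ge (ε c x : ℝ) : √(c - x ^ 2) ≤ dispH ε c x :=
  Real.sqrt_le_sqrt (dispG_ge ε c x)

lemma dispH_le {ε : ℝ} (hε : 0 < ε) (c x : ℝ) : dispH ε c x ≤ √(c - x ^ 2) + √(ε / 2) := by
  unfold dispH
  rw [Real.sqrt_le_left (by positivity)]
  refine (dispG_le hε c x).trans ?_
  have h1 := Real.sq_sqrt (show 0 ≤ ε / 2 by positivity)
  have h2 : max (c - x ^ 2) 0 ≤ √(c - x ^ 2) ^ 2 := by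
    apply max_le _ (sq_nonneg _)
    rcases le_total (c - x ^ 2) 0 with h0 | h0
    · exact h0.trans (sq_nonneg _)
    · rw [Real.sq_sqrt h0]
  nlinarith [mul_nonneg (Real.sqrt_nonneg (c - x ^ 2)) (Real.sqrt_nonneg (ε / 2))]

lemma dispH_contDiff {ε : ℝ} (hε : 0 < ε) :
    ContDiff ℝ (⊤ : ℕ∞) (fun p : ℝ × ℝ => dispH ε p.1 p.2) := by
  unfold dispH
  apply ContDiff.sqrt
  · unfold dispG
    apply ContDiff.div_const
    apply ContDiff.add (by fun_prop)
    apply ContDiff.sqrt (by fun_prop)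
    intro x
    positivity
  · intro x; exact (dispG_pos hε _ _).ne'

lemma contDiff_primitive {f : ℝ × ℝ → ℝ} (hf : ContDiff ℝ (⊤ : ℕ∞) f) :
    ContDiff ℝ (⊤ : ℕ∞) (fun p : ℝ × ℝ => ∫ u in (0 : ℝ)..p.2, f (p.1, u)) := by
  obtain ⟨χ, hχ1, hχ2⟩ : ∃ χ : ContDiffBump (0 : ℝ), χ.rIn = 2 ∧ χ.rOut = 3 :=
    ⟨⟨2, 3, by norm_num, by norm_num⟩, rfl, rfl⟩
  have key := MeasureTheory.contDiffOn_convolution_right_with_param (𝕜 := ℝ) (n := (⊤ : ℕ∞)) (G := ℝ) (P := ℝ × ℝ)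
    (μ := MeasureTheory.volume)
    (f := Set.indicator (Set.Ioc (0 : ℝ) 1) (fun _ => (1 : ℝ))) (ContinuousLinearMap.mul ℝ ℝ)
    (g := fun (p : ℝ × ℝ) x => χ x * (p.2 * f (p.1, -x * p.2))) (s := Set.univ)
    (k := Metric.closedBall 0 3) isOpen_univ (isCompact_closedBall _ _)
    (by
      intro p x _ hx
      rw [χ.zero_of_le_dist, zero_mul]
      rw [hχ2]; simp only [Metric.mem_closedBall, not_le] at hx; exact hx.le)
    (by
      apply MeasureTheory.Integrable.locallyIntegrable
      rw [MeasureTheory.integrable_indicator_iff measurableSet_Ioc]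
      exact MeasureTheory.integrableOn_const (by simp))
    (by
      apply ContDiff.contDiffOn
      apply ContDiff.mul
      · exact χ.contDiff.comp (by fun_prop)
      · exact ContDiff.mul (by fun_prop) (hf.comp (by fun_prop)))
  rw [Set.univ_prod_univ, contDiffOn_univ] at key
  have := key.comp (f := fun p : ℝ × ℝ => (p, (0 : ℝ))) (by fun_prop)
  convert this using 1
  ext p
  simp only [Function.comp, MeasureTheory.convolution, ContinuousLinearMap.mul_apply']
  have e1 : ∀ t : ℝ, (Set.Ioc (0 : ℝ) 1).indicator (fun _ => (1 : ℝ)) t *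
      (χ (0 - t) * (p.2 * f (p.1, -(0 - t) * p.2))) =
      (Set.Ioc (0 : ℝ) 1).indicator (fun t => p.2 * f (p.1, t * p.2)) t := by
    intro t
    by_cases ht : t ∈ Set.Ioc (0 : ℝ) 1
    · rw [Set.indicator_of_mem ht, Set.indicator_of_mem ht, χ.one_of_mem_closedBall]
      · simp
      · rw [hχ1]; simp only [zero_sub, Metric.mem_closedBall, dist_zero_right, norm_neg, norm_eq_abs]
        rw [abs_of_pos ht.1]; linarith [ht.2]
    · rw [Set.indicator_of_notMem ht, Set.indicator_of_notMem ht, zero_mul]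
  simp_rw [e1]
  rw [MeasureTheory.integral_indicator measurableSet_Ioc,
    ← intervalIntegral.integral_of_le (by norm_num), intervalIntegral.integral_const_mul,
    intervalIntegral.mul_integral_comp_mul_right (f := fun u => f (p.1, u))]
  simp

lemma dispJ_contDiff {ε : ℝ} (hε : 0 < ε) :
    ContDiff ℝ (⊤ : ℕ∞) (fun p : ℝ × ℝ => dispJ ε p.1 p.2) :=
  contDiff_primitive (dispH_contDiff hε)

lemma dispH_continuous {ε : ℝ} (hε : 0 < ε) (c : ℝ) : Continuous (dispH ε c) :=
  (dispH_contDiff hε).continuous.comp (by fun_prop : Continuous fun x : ℝ => (c, x))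

lemma dispJ_hasDerivAt {ε : ℝ} (hε : 0 < ε) (c x : ℝ) :
    HasDerivAt (dispJ ε c) (dispH ε c x) x :=
  intervalIntegral.integral_hasDerivAt_right ((dispH_continuous hε c).intervalIntegrable _ _)
    ((dispH_continuous hε c).stronglyMeasurableAtFilter _ _) (dispH_continuous hε c).continuousAt

lemma dispJ_sub {ε : ℝ} (hε : 0 < ε) (c x y : ℝ) :
    dispJ ε c y - dispJ ε c x = ∫ u in x..y, dispH ε c u := by
  unfold dispJ
  rw [intervalIntegral.integral_interval_sub_left] <;>
  exact (dispH_continuous hε c).intervalIntegrable _ _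

lemma semicircle {r : ℝ} (hr : 0 < r) : ∫ x in (-r)..r, √(r ^ 2 - x ^ 2) = π * r ^ 2 / 2 := by
  have h := intervalIntegral.integral_comp_mul_left (a := -1) (b := 1)
    (fun x => √(r ^ 2 - x ^ 2)) hr.ne'
  have h2 : ∀ x : ℝ, √(r ^ 2 - (r * x) ^ 2) = r * √(1 - x ^ 2) := by
    intro x
    rw [show r ^ 2 - (r * x) ^ 2 = r ^ 2 * (1 - x ^ 2) by ring,
      Real.sqrt_mul (sq_nonneg r), Real.sqrt_sq hr.le]
  simp_rw [h2] at h
  rw [intervalIntegral.integral_const_mul, integral_sqrt_one_sub_sq] at h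
  simp only [mul_neg, mul_one, smul_eq_mul] at h
  field_simp at h
  linarith

lemma semicircle' {c L : ℝ} (hc : 0 < c) (hL : 0 < L) (h : c ≤ L ^ 2) :
    ∫ x in (-L)..L, √(c - x ^ 2) = π * c / 2 := by
  have hr : 0 < √c := Real.sqrt_pos.2 hc
  have hsq := Real.sq_sqrt hc.le
  have hrL : √c ≤ L := Real.sqrt_le_iff.2 ⟨hL.le, h⟩
  have hcont : Continuous fun x : ℝ => √(c - x ^ 2) := by fun_prop
  have hi : ∀ x y, IntervalIntegrable (fun x : ℝ => √(c - x ^ 2)) MeasureTheory.volume x y :=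
    fun x y => hcont.intervalIntegrable _ _
  have e1 : ∫ x in (-L)..(-√c), √(c - x ^ 2) = 0 := by
    rw [intervalIntegral.integral_congr (g := fun _ => 0)]
    · simp
    · intro x hx
      rw [Set.uIcc_of_le (by linarith)] at hx
      exact Real.sqrt_eq_zero_of_nonpos (by nlinarith [hx.2])
  have e2 : ∫ x in (√c)..L, √(c - x ^ 2) = 0 := by
    rw [intervalIntegral.integral_congr (g := fun _ => 0)]
    · simp
    · intro x hx
      rw [Set.uIcc_of_le (by linarith)] at hx
      exact Real.sqrt_eq_zero_of_nonpos (by nlinarith [hx.1])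
  rw [← intervalIntegral.integral_add_adjacent_intervals (hi (-L) (-√c)) (hi _ _),
    ← intervalIntegral.integral_add_adjacent_intervals (hi (-√c) (√c)) (hi _ _), e1, e2]
  have := semicircle hr
  rw [hsq] at this
  rw [this]; ring

lemma mass_le {ε c L : ℝ} (hε : 0 < ε) (hc : 0 < c) (hL : 0 < L) (h : c ≤ L ^ 2) :
    dispJ ε c L - dispJ ε c (-L) ≤ π * c / 2 + 2 * L * √(ε / 2) := by
  rw [dispJ_sub hε, ← semicircle' hc hL h]
  have hcont : Continuous fun x : ℝ => √(c - x ^ 2) := by fun_prop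
  calc ∫ u in (-L)..L, dispH ε c u ≤ ∫ u in (-L)..L, (√(c - u ^ 2) + √(ε / 2)) := by
        apply intervalIntegral.integral_mono_on (by linarith)
          ((dispH_continuous hε c).intervalIntegrable _ _)
          ((hcont.add continuous_const).intervalIntegrable _ _)
        intro x _
        exact dispH_le hε c x
    _ = _ := by
        rw [intervalIntegral.integral_add (hcont.intervalIntegrable _ _)
          (continuous_const.intervalIntegrable _ _)]
        simp; ring

lemma le_mass {ε c L : ℝ} (hε : 0 < ε) (hc : 0 < c) (hL : 0 < L) (h : c ≤ L ^ 2) :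
    π * c / 2 ≤ dispJ ε c L - dispJ ε c (-L) := by
  rw [dispJ_sub hε, ← semicircle' hc hL h]
  have hcont : Continuous fun x : ℝ => √(c - x ^ 2) := by fun_prop
  apply intervalIntegral.integral_mono_on (by linarith)
    (hcont.intervalIntegrable _ _) ((dispH_continuous hε c).intervalIntegrable _ _)
  intro x _
  exact dispH_ge ε c x

lemma dispJ_strictMono {ε : ℝ} (hε : 0 < ε) (c : ℝ) : StrictMono (dispJ ε c) :=
  strictMono_of_hasDerivAt_pos (fun x => dispJ_hasDerivAt hε c x) (fun x => dispH_pos hε c x)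

lemma mass_mono {ε : ℝ} (hε : 0 < ε) {c C : ℝ} (h : c ≤ C) {x y : ℝ} (hxy : x ≤ y) :
    dispJ ε c y - dispJ ε c x ≤ dispJ ε C y - dispJ ε C x := by
  rw [dispJ_sub hε, dispJ_sub hε]
  apply intervalIntegral.integral_mono_on hxy
    ((dispH_continuous hε c).intervalIntegrable _ _)
    ((dispH_continuous hε C).intervalIntegrable _ _)
  intro x _
  exact dispH_mono hε h x

theorem exists_global_flow {E : Type*} [NormedAddCommGroup E] [NormedSpace ℝ E] [CompleteSpace E]
    (V : ℝ × E → E) (hV : ContDiff ℝ 1 V) (hc : HasCompactSupport V) :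
    ∃ b : ℝ → E → E, b 0 = id ∧ ∀ z t, HasDerivAt (fun s => b s z) (V (t, b t z)) t := by
  obtain ⟨K, hK⟩ := hV.lipschitzWith_of_hasCompactSupport hc (by norm_num)
  obtain ⟨L, hL⟩ := hV.continuous.bounded_above_of_compact_support hc
  have hKt : ∀ t, LipschitzWith K (fun x => V (t, x)) := by
    intro t
    have := hK.comp (LipschitzWith.prodMk_left (α := ℝ) (β := E) t)
    rw [mul_one] at this
    exact this
  have loc : ∀ (z : E) (m : ℕ), ∃ f : ℝ → E, f 0 = z ∧
      ∀ t ∈ Set.Ioo (-(m + 1 : ℝ)) (m + 1), HasDerivAt f (V (t, f t)) t := by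
    intro z m
    have hmem : (0 : ℝ) ∈ Set.Icc (-(m + 1 : ℝ)) (m + 1) := by
      constructor <;> linarith [(Nat.cast_nonneg m : (0 : ℝ) ≤ m)]
    have pl : IsPicardLindelof (fun t x => V (t, x)) (tmin := -(m + 1 : ℝ)) (tmax := m + 1)
        ⟨0, hmem⟩ z (L.toNNReal * (m + 1)) 0 L.toNNReal K := by
      refine ⟨fun t _ => (hKt t).lipschitzOnWith, ?_, ?_, ?_⟩
      · intro x _
        exact (hV.continuous.comp (by fun_prop)).continuousOn
      · intro t _ x _
        exact (hL _).trans (Real.le_coe_toNNReal L)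
      · simp
    obtain ⟨f, hf0, hf⟩ := pl.exists_eq_forall_mem_Icc_hasDerivWithinAt₀
    refine ⟨f, hf0, fun t ht => ?_⟩
    exact (hf t (Set.Ioo_subset_Icc_self ht)).hasDerivAt (Icc_mem_nhds ht.1 ht.2)
  choose f hf0 hf using loc
  have agree : ∀ z (m m' : ℕ), m ≤ m' →
      Set.EqOn (f z m) (f z m') (Set.Ioo (-(m + 1 : ℝ)) (m + 1)) := by
    intro z m m' hmm
    have hmm' : (m : ℝ) ≤ m' := by exact_mod_cast hmm
    refine ODE_solution_unique_of_mem_Ioo (v := fun t x => V (t, x)) (s := fun _ => Set.univ)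
      (K := K) (t₀ := 0) (fun t _ => (hKt t).lipschitzOnWith) ?_ ?_ ?_ ?_
    · constructor <;> linarith [(Nat.cast_nonneg m : (0 : ℝ) ≤ m)]
    · intro t ht; exact ⟨hf z m t ht, trivial⟩
    · intro t ht
      exact ⟨hf z m' t ⟨by linarith [ht.1], by linarith [ht.2]⟩, trivial⟩
    · rw [hf0, hf0]
  refine ⟨fun t z => f z ⌈|t|⌉₊ t, ?_, ?_⟩
  · funext z; simp [hf0]
  · intro z t
    have hmem : ∀ u : ℝ, u ∈ Set.Ioo (-((⌈|u|⌉₊ : ℕ) + 1 : ℝ)) ((⌈|u|⌉₊ : ℕ) + 1) := by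
      intro u
      have := Nat.le_ceil |u|
      constructor
      · linarith [neg_abs_le u]
      · linarith [le_abs_self u]
    have ev : (fun s => f z ⌈|s|⌉₊ s) =ᶠ[nhds t] f z ⌈|t|⌉₊ := by
      filter_upwards [Ioo_mem_nhds (hmem t).1 (hmem t).2] with u hu
      rcases le_total ⌈|u|⌉₊ ⌈|t|⌉₊ with h | h
      · exact agree z _ _ h (hmem u)
      · exact (agree z _ _ h hu).symm
    exact (hf z _ t (hmem t)).congr_of_eventuallyEq ev

/-- Transport lemma. -/
theorem transport_invariant (h0 h1 M0 M1 : ℝ → ℝ) (U : ℝ → ℝ → ℝ)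
    (hM0 : ∀ x, HasDerivAt M0 (h0 x) x) (hM1 : ∀ x, HasDerivAt M1 (h1 x) x)
    (hd0 : Differentiable ℝ h0) (hd1 : Differentiable ℝ h1)
    (hp0 : ∀ x, 0 < h0 x) (hp1 : ∀ x, 0 < h1 x)
    (hU : ∀ τ x, U τ x = -(M1 x - M0 x) / ((1 - τ) * h0 x + τ * h1 x))
    (X Y σ β : ℝ → ℝ) (T ρ : ℝ) (hT : 0 ≤ T)
    (hσ : ∀ t, HasDerivAt σ (β t) t) (hσ01 : ∀ t, σ t ∈ Set.Icc (0 : ℝ) 1) (hσ0 : σ 0 = 0)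
    (hX : Continuous X) (hY : Continuous Y)
    (hode : ∀ t ∈ Set.Icc 0 T, X t ^ 2 + Y t ^ 2 < ρ →
      HasDerivAt X (β t * U (σ t) (X t)) t ∧
      HasDerivAt Y (-(Y t * (β t * deriv (U (σ t)) (X t)))) t)
    (hbar : ∀ τ ∈ Set.Icc (0 : ℝ) 1, ∀ x y : ℝ, |y| < (1 - τ) * h0 x + τ * h1 x →
      (1 - τ) * M0 x + τ * M1 x = M0 (X 0) → x ^ 2 + y ^ 2 < ρ)
    (hini : |Y 0| < h0 (X 0)) :
    (1 - σ T) * M0 (X T) + σ T * M1 (X T) = M0 (X 0) := by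
  have hh : ∀ t, 0 < (1 - σ t) * h0 (X t) + σ t * h1 (X t) := by
    intro t
    have h2 := hp0 (X t)
    have h3 := hp1 (X t)
    rcases (hσ01 t).1.eq_or_lt with h | h
    · rw [← h]; simpa using h2
    · have := mul_pos h h3
      have := mul_nonneg (sub_nonneg.2 (hσ01 t).2) h2.le
      linarith
  have hσc : Continuous σ := continuous_iff_continuousAt.2 fun t => (hσ t).continuousAt
  have hM0c : Continuous M0 := continuous_iff_continuousAt.2 fun t => (hM0 t).continuousAt
  have hM1c : Continuous M1 := continuous_iff_continuousAt.2 fun t => (hM1 t).continuousAt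
  have hc0 := hd0.continuous
  have hc1 := hd1.continuous
  set A : ℝ → ℝ := fun t => (1 - σ t) * M0 (X t) + σ t * M1 (X t) with hA
  set B : ℝ → ℝ := fun t => Y t / ((1 - σ t) * h0 (X t) + σ t * h1 (X t)) with hB
  have hAc : Continuous A := by fun_prop
  have hBc : Continuous B := by
    apply Continuous.div hY (by fun_prop)
    intro t; exact (hh t).ne'
  -- constancy as long as we are inside
  have const : ∀ t1 ∈ Set.Icc 0 T, (∀ t ∈ Set.Ico 0 t1, X t ^ 2 + Y t ^ 2 < ρ) →
      A t1 = A 0 ∧ B t1 = B 0 := by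
    intro t1 ht1 hin
    have hAd : ∀ t ∈ Set.Ico 0 t1, HasDerivAt A 0 t ∧ HasDerivAt B 0 t := by
      intro t ht
      obtain ⟨hx, hy⟩ := hode t ⟨ht.1, ht.2.le.trans ht1.2⟩ (hin t ht)
      have hne := (hh t).ne'
      have hs1 : HasDerivAt (fun t => 1 - σ t) (-β t) t := by
        simpa using (hσ t).const_sub 1
      have hUx := hU (σ t) (X t)
      have hUmul : U (σ t) (X t) * ((1 - σ t) * h0 (X t) + σ t * h1 (X t)) =
          -(M1 (X t) - M0 (X t)) := by rw [hUx]; field_simp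
      constructor
      · have := (hs1.mul ((hM0 (X t)).comp t hx)).add ((hσ t).mul ((hM1 (X t)).comp t hx))
        refine this.congr_deriv ?_
        simp only [Function.comp]
        linear_combination β t * hUmul
      · have hden := (hs1.mul ((hd0 (X t)).hasDerivAt.comp t hx)).add
          ((hσ t).mul ((hd1 (X t)).hasDerivAt.comp t hx))
        have hdU : HasDerivAt (U (σ t)) (((-(h1 (X t) - h0 (X t))) *
            ((1 - σ t) * h0 (X t) + σ t * h1 (X t)) - (-(M1 (X t) - M0 (X t))) *
            ((1 - σ t) * deriv h0 (X t) + σ t * deriv h1 (X t))) /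
            ((1 - σ t) * h0 (X t) + σ t * h1 (X t)) ^ 2) (X t) := by
          have e : U (σ t) = fun x => -(M1 x - M0 x) / ((1 - σ t) * h0 x + σ t * h1 x) :=
            funext (hU (σ t))
          rw [e]
          exact (((hM1 _).sub (hM0 _)).neg).div
            (((hd0 (X t)).hasDerivAt.const_mul _).add ((hd1 (X t)).hasDerivAt.const_mul _)) hne
        have := hy.div hden hne
        refine this.congr_deriv ?_
        rw [hdU.deriv]
        simp only [Function.comp, Pi.add_apply, Pi.mul_apply]
        rw [div_eq_zero_iff]; left
        rw [hUx]
        generalize hD : (1 - σ t) * h0 (X t) + σ t * h1 (X t) = D at hne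
        field_simp
        ring
    have c1 := constant_of_has_deriv_right_zero hAc.continuousOn
      (fun t ht => (hAd t ht).1.hasDerivWithinAt) t1 ⟨ht1.1, le_rfl⟩
    have c2 := constant_of_has_deriv_right_zero hBc.continuousOn
      (fun t ht => (hAd t ht).2.hasDerivWithinAt) t1 ⟨ht1.1, le_rfl⟩
    exact ⟨c1, c2⟩
  have A0 : A 0 = M0 (X 0) := by simp [hA, hσ0]
  have B0 : |B 0| < 1 := by
    simp only [hB, hσ0]
    rw [abs_div, div_lt_one (by simpa using (hp0 (X 0)).ne')]
    simpa [abs_of_pos (hp0 (X 0))] using hini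
  have inside : ∀ t1 ∈ Set.Icc 0 T, (∀ t ∈ Set.Ico 0 t1, X t ^ 2 + Y t ^ 2 < ρ) →
      X t1 ^ 2 + Y t1 ^ 2 < ρ := by
    intro t1 ht1 hin
    obtain ⟨e1, e2⟩ := const t1 ht1 hin
    apply hbar (σ t1) (hσ01 t1)
    · rw [← e2] at B0
      simp only [hB] at B0
      rwa [abs_div, abs_of_pos (hh t1), div_lt_one (hh t1)] at B0
    · rw [← A0, ← e1]
  have all : ∀ t ∈ Set.Icc 0 T, X t ^ 2 + Y t ^ 2 < ρ := by
    by_contra hcon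
    push Not at hcon
    obtain ⟨t2, ht2, hbad⟩ := hcon
    set S : Set ℝ := Set.Icc 0 T ∩ {t | ρ ≤ X t ^ 2 + Y t ^ 2} with hS
    have hScl : IsClosed S := isClosed_Icc.inter (isClosed_le continuous_const (by fun_prop))
    have hSne : S.Nonempty := ⟨t2, ht2, hbad⟩
    have hSb : BddBelow S := ⟨0, fun t ht => ht.1.1⟩
    have hm := hScl.csInf_mem hSne hSb
    have := inside _ hm.1 (fun t ht => by
      by_contra hn
      have : t ∈ S := ⟨⟨ht.1, ht.2.le.trans hm.1.2⟩, not_lt.1 hn⟩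
      exact absurd (csInf_le hSb this) (not_le.2 ht.2))
    exact absurd hm.2 (not_le.2 this)
  rw [← A0]
  exact (const T ⟨hT, le_rfl⟩ (fun t ht => all t ⟨ht.1, ht.2.le⟩)).1
noncomputable def dispU (ε e c C τ x : ℝ) : ℝ :=
  -((dispJ ε C x - dispJ ε C e) - (dispJ ε c x - dispJ ε c e)) /
    ((1 - τ) * dispH ε c x + τ * dispH ε C x)

noncomputable def dispS (t : ℝ) : ℝ := Real.smoothTransition (3 * t)

lemma dispS_contDiff : ContDiff ℝ (⊤ : ℕ∞) dispS :=
  Real.smoothTransition.contDiff.comp (by fun_prop)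

lemma dispS_mem (t : ℝ) : dispS t ∈ Set.Icc (0 : ℝ) 1 :=
  ⟨Real.smoothTransition.nonneg _, Real.smoothTransition.le_one _⟩

lemma dispS_hasDerivAt (t : ℝ) : HasDerivAt dispS (deriv dispS t) t :=
  (dispS_contDiff.differentiable (by simp) t).hasDerivAt

lemma dispS_zero : dispS 0 = 0 := by simp [dispS]

lemma dispS_half : dispS (1 / 2) = 1 := Real.smoothTransition.one_of_one_le (by norm_num)

lemma deriv_dispS_neg {t : ℝ} (ht : t < 0) : deriv dispS t = 0 := by
  have : dispS =ᶠ[nhds t] fun _ => 0 := by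
    filter_upwards [Iio_mem_nhds ht] with u hu
    exact Real.smoothTransition.zero_of_nonpos (by simp only [Set.mem_Iio] at hu; linarith)
  rw [this.deriv_eq]; simp

lemma deriv_dispS_big {t : ℝ} (ht : 1 / 2 ≤ t) : deriv dispS t = 0 := by
  have : dispS =ᶠ[nhds t] fun _ => 1 := by
    filter_upwards [Ioi_mem_nhds (show 1 / 3 < t by linarith)] with u hu
    exact Real.smoothTransition.one_of_one_le (by simp only [Set.mem_Ioi] at hu; linarith)
  rw [this.deriv_eq]; simp

lemma dispDen_pos {ε : ℝ} (hε : 0 < ε) {τ : ℝ} (hτ : τ ∈ Set.Icc (0 : ℝ) 1) (c C x : ℝ) :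
    0 < (1 - τ) * dispH ε c x + τ * dispH ε C x := by
  have h2 := dispH_pos hε c x
  have h3 := dispH_pos hε C x
  rcases hτ.1.eq_or_lt with h | h
  · rw [← h]; simpa using h2
  · have := mul_pos h h3
    have := mul_nonneg (sub_nonneg.2 hτ.2) h2.le
    linarith

lemma dispL_sq {ε : ℝ} (hε : 0 < ε) {C : ℝ} (hC : 0 < C) :
    C ≤ dispH ε C 0 ^ 2 ∧ dispH ε C 0 ^ 2 ≤ C + ε / 2 := by
  rw [dispH_sq hε]
  have h1 := dispG_ge ε C 0
  have h2 := dispG_le hε C 0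
  simp only [ne_eq, OfNat.ofNat_ne_zero, not_false_eq_true, zero_pow, sub_zero] at h1 h2
  rw [max_eq_left hC.le] at h2
  exact ⟨h1, h2⟩

lemma disp_barrier {ε : ℝ} (hε : 0 < ε) {c C : ℝ} (hC : 0 < C) (hcC : c ≤ C) (e x0 : ℝ)
    (hx0 : |x0| < dispH ε C 0)
    (he : e = dispH ε C 0 ∨ e = -dispH ε C 0) :
    ∀ τ ∈ Set.Icc (0 : ℝ) 1, ∀ x y : ℝ, |y| < (1 - τ) * dispH ε c x + τ * dispH ε C x →
      (1 - τ) * (dispJ ε c x - dispJ ε c e) + τ * (dispJ ε C x - dispJ ε C e) =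
        dispJ ε c x0 - dispJ ε c e → x ^ 2 + y ^ 2 < C + ε := by
  intro τ hτ x y hy hM
  obtain ⟨hL1, hL2⟩ := dispL_sq hε hC
  have hLpos := dispH_pos hε C 0
  set L := dispH ε C 0
  have hx0' := abs_lt.1 hx0
  have mm := mass_mono hε hcC (show -L ≤ L by linarith)
  have m1 := dispJ_strictMono hε c hx0'.1
  have m2 := dispJ_strictMono hε c hx0'.2
  have h1τ : 0 ≤ 1 - τ := sub_nonneg.2 hτ.2
  have hτ0 := hτ.1
  have up : x < L := by
    by_contra hcon
    push Not at hcon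
    have a1 := (dispJ_strictMono hε c).monotone hcon
    have a2 := (dispJ_strictMono hε C).monotone hcon
    have b1 := mul_le_mul_of_nonneg_left a1 h1τ
    have b2 := mul_le_mul_of_nonneg_left a2 hτ0
    have b3 := mul_le_mul_of_nonneg_left mm hτ0
    rcases he with rfl | rfl <;> nlinarith
  have lo : -L < x := by
    by_contra hcon
    push Not at hcon
    have a1 := (dispJ_strictMono hε c).monotone hcon
    have a2 := (dispJ_strictMono hε C).monotone hcon
    have b1 := mul_le_mul_of_nonneg_left a1 h1τ
    have b2 := mul_le_mul_of_nonneg_left a2 hτ0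
    have b3 := mul_le_mul_of_nonneg_left mm hτ0
    rcases he with rfl | rfl <;> nlinarith
  have hyC : |y| < dispH ε C x := by
    have := mul_le_mul_of_nonneg_left (dispH_mono hε hcC x) h1τ
    linarith
  have hy2 : y ^ 2 < dispG ε C x := by
    rw [← dispH_sq hε, ← sq_abs y]
    exact pow_lt_pow_left₀ hyC (abs_nonneg _) (by norm_num)
  have hx2 : x ^ 2 < L ^ 2 := by nlinarith
  have hg := dispG_le hε C x
  rcases le_total (C - x ^ 2) 0 with h | h
  · rw [max_eq_right h] at hg; linarith
  · rw [max_eq_left h] at hg; linarith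

lemma dispH_diff {ε : ℝ} (hε : 0 < ε) (c : ℝ) : Differentiable ℝ (dispH ε c) :=
  ((dispH_contDiff hε).comp (by fun_prop : ContDiff ℝ (⊤ : ℕ∞) fun x : ℝ => (c, x))).differentiable
    (by simp)

lemma disp_stage {ε : ℝ} (hε : 0 < ε) {c C : ℝ} (hC : 0 < C) (hcC : c ≤ C) (e : ℝ)
    (he : e = dispH ε C 0 ∨ e = -dispH ε C 0)
    (X Y : ℝ → ℝ) (hX : Continuous X) (hY : Continuous Y)
    (hode : ∀ t ∈ Set.Icc (0 : ℝ) (1 / 2), X t ^ 2 + Y t ^ 2 < C + ε →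
      HasDerivAt X (deriv dispS t * dispU ε e c C (dispS t) (X t)) t ∧
      HasDerivAt Y (-(Y t * (deriv dispS t * deriv (dispU ε e c C (dispS t)) (X t)))) t)
    (hini : X 0 ^ 2 + Y 0 ^ 2 < c) :
    |X 0| < dispH ε C 0 ∧
    dispJ ε C (X (1 / 2)) - dispJ ε C e = dispJ ε c (X 0) - dispJ ε c e := by
  obtain ⟨hL1, hL2⟩ := dispL_sq hε hC
  have hLpos := dispH_pos hε C 0
  have hX0 : |X 0| < dispH ε C 0 := by
    apply abs_lt_of_sq_lt_sq _ hLpos.le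
    nlinarith [sq_nonneg (Y 0)]
  refine ⟨hX0, ?_⟩
  have := transport_invariant (dispH ε c) (dispH ε C) (fun x => dispJ ε c x - dispJ ε c e)
    (fun x => dispJ ε C x - dispJ ε C e) (dispU ε e c C)
    (fun x => (dispJ_hasDerivAt hε c x).sub_const _)
    (fun x => (dispJ_hasDerivAt hε C x).sub_const _)
    (dispH_diff hε c) (dispH_diff hε C) (dispH_pos hε c) (dispH_pos hε C)
    (fun τ x => rfl) X Y dispS (deriv dispS) (1 / 2) (C + ε) (by norm_num)
    dispS_hasDerivAt dispS_mem dispS_zero hX hY hode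
    (disp_barrier hε hC hcC e (X 0) hX0 he)
    (by
      refine lt_of_lt_of_le ?_ (dispH_ge ε c (X 0))
      apply Real.lt_sqrt_of_sq_lt
      rw [sq_abs]; linarith)
  rw [dispS_half] at this
  simpa using this

theorem planar_disp {ε : ℝ} (hε : 0 < ε) {c1 c2 C : ℝ} (hC : 0 < C) (h1C : c1 ≤ C) (h2C : c2 ≤ C)
    (mass : (dispJ ε c1 (dispH ε C 0) - dispJ ε c1 (-dispH ε C 0)) +
      (dispJ ε c2 (dispH ε C 0) - dispJ ε c2 (-dispH ε C 0)) ≤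
      dispJ ε C (dispH ε C 0) - dispJ ε C (-dispH ε C 0))
    (X Y : ℝ → ℝ) (hX : Continuous X) (hY : Continuous Y)
    (hode : ∀ t, X t ^ 2 + Y t ^ 2 < C + ε →
      HasDerivAt X (deriv dispS t * dispU ε (-dispH ε C 0) c1 C (dispS t) (X t)
        - deriv dispS (1 - t) * dispU ε (dispH ε C 0) c2 C (dispS (1 - t)) (X t)) t ∧
      HasDerivAt Y (-(Y t * (deriv dispS t * deriv (dispU ε (-dispH ε C 0) c1 C (dispS t)) (X t)
        - deriv dispS (1 - t) *
          deriv (dispU ε (dispH ε C 0) c2 C (dispS (1 - t))) (X t)))) t)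
    (h0 : X 0 ^ 2 + Y 0 ^ 2 < c1) (h1 : X 1 ^ 2 + Y 1 ^ 2 < c2) : False := by
  obtain ⟨a1, a2⟩ := disp_stage hε hC h1C (-dispH ε C 0) (Or.inr rfl) X Y hX hY (by
    intro t ht hin
    have := hode t hin
    rw [deriv_dispS_big (show 1 / 2 ≤ 1 - t by linarith [ht.2])] at this
    simpa using this) h0
  obtain ⟨b1, b2⟩ := disp_stage hε hC h2C (dispH ε C 0) (Or.inl rfl)
    (fun t => X (1 - t)) (fun t => Y (1 - t)) (hX.comp (by fun_prop)) (hY.comp (by fun_prop)) (by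
    intro t ht hin
    have := hode (1 - t) hin
    rw [deriv_dispS_big (show 1 / 2 ≤ 1 - t by linarith [ht.2]), sub_sub_cancel] at this
    have hd : HasDerivAt (fun t : ℝ => 1 - t) (-1) t := by
      simpa using (hasDerivAt_id t).const_sub 1
    refine ⟨(this.1.comp t hd).congr_deriv (by ring), (this.2.comp t hd).congr_deriv (by ring)⟩)
    (by simpa using h1)
  norm_num at b1 b2
  have a1' := abs_lt.1 a1
  have b1' := abs_lt.1 b1
  have m1 := dispJ_strictMono hε c1 a1'.2
  have m2 := dispJ_strictMono hε c2 b1'.1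
  norm_num at a2
  linarith

lemma inner_complex_real (x y : ℂ) : inner ℝ x y = x.re * y.re + x.im * y.im := by
  rw [Complex.inner]; simp [Complex.mul_re]; ring

noncomputable def dN (n : ℕ) [NeZero n] (k : Fin n → ℝ) (z : EuclideanSpace ℂ (Fin n)) :
    EuclideanSpace ℂ (Fin n) →L[ℝ] ℝ :=
  π • ∑ j ∈ Finset.univ.erase (0 : Fin n), k j •
    ((2 * (z j).re) • Complex.reCLM.comp (PiLp.proj 2 (fun _ : Fin n => ℂ) j : _ →L[ℝ] ℂ) +
     (2 * (z j).im) • Complex.imCLM.comp (PiLp.proj 2 (fun _ : Fin n => ℂ) j : _ →L[ℝ] ℂ))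

lemma dN_apply (n : ℕ) [NeZero n] (k : Fin n → ℝ) (z v : EuclideanSpace ℂ (Fin n)) :
    dN n k z v = π * ∑ j ∈ Finset.univ.erase (0 : Fin n), k j *
      (2 * (z j).re * (v j).re + 2 * (z j).im * (v j).im) := by
  simp [dN, mul_add]

lemma re_coord_hasFDerivAt (n : ℕ) (z : EuclideanSpace ℂ (Fin n)) (j : Fin n) :
    HasFDerivAt (fun w : EuclideanSpace ℂ (Fin n) => (w j).re)
      (Complex.reCLM.comp (PiLp.proj 2 (fun _ : Fin n => ℂ) j : _ →L[ℝ] ℂ)) z :=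
  (Complex.reCLM.comp (PiLp.proj 2 (fun _ : Fin n => ℂ) j : _ →L[ℝ] ℂ)).hasFDerivAt

lemma im_coord_hasFDerivAt (n : ℕ) (z : EuclideanSpace ℂ (Fin n)) (j : Fin n) :
    HasFDerivAt (fun w : EuclideanSpace ℂ (Fin n) => (w j).im)
      (Complex.imCLM.comp (PiLp.proj 2 (fun _ : Fin n => ℂ) j : _ →L[ℝ] ℂ)) z :=
  (Complex.imCLM.comp (PiLp.proj 2 (fun _ : Fin n => ℂ) j : _ →L[ℝ] ℂ)).hasFDerivAt

lemma N_eq (n : ℕ) [NeZero n] (k : Fin n → ℝ)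
    (N : EuclideanSpace ℂ (Fin n) → ℝ)
    (hN : ∀ z, N z = π * ∑ j ∈ Finset.univ.erase (0 : Fin n), k j * ‖z j‖ ^ 2) :
    N = fun z => π * ∑ j ∈ Finset.univ.erase (0 : Fin n), k j * ((z j).re ^ 2 + (z j).im ^ 2) := by
  funext z
  rw [hN]
  congr 1
  apply Finset.sum_congr rfl
  intro j _
  rw [Complex.sq_norm, Complex.normSq_apply]; ring

lemma N_hasFDerivAt (n : ℕ) [NeZero n] (k : Fin n → ℝ)
    (N : EuclideanSpace ℂ (Fin n) → ℝ)
    (hN : ∀ z, N z = π * ∑ j ∈ Finset.univ.erase (0 : Fin n), k j * ‖z j‖ ^ 2)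
    (z : EuclideanSpace ℂ (Fin n)) : HasFDerivAt N (dN n k z) z := by
  rw [N_eq n k N hN]
  unfold dN
  apply HasFDerivAt.const_mul
  apply HasFDerivAt.fun_sum
  intro j _
  apply HasFDerivAt.const_mul
  have h1 := (re_coord_hasFDerivAt n z j).pow 2
  have h2 := (im_coord_hasFDerivAt n z j).pow 2
  refine (h1.add h2).congr_fderiv ?_
  ext v
  simp

lemma N_contDiff (n : ℕ) [NeZero n] (k : Fin n → ℝ)
    (N : EuclideanSpace ℂ (Fin n) → ℝ)
    (hN : ∀ z, N z = π * ∑ j ∈ Finset.univ.erase (0 : Fin n), k j * ‖z j‖ ^ 2) :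
    ContDiff ℝ (⊤ : ℕ∞) N := by
  rw [N_eq n k N hN]
  apply ContDiff.mul contDiff_const
  apply ContDiff.sum
  intro j _
  apply ContDiff.mul contDiff_const
  apply ContDiff.add
  · exact (Complex.reCLM.comp (PiLp.proj 2 (fun _ : Fin n => ℂ) j : _ →L[ℝ] ℂ)).contDiff.pow 2
  · exact (Complex.imCLM.comp (PiLp.proj 2 (fun _ : Fin n => ℂ) j : _ →L[ℝ] ℂ)).contDiff.pow 2

theorem grad_facts (n : ℕ) [NeZero n] (k : Fin n → ℝ)
    (N : EuclideanSpace ℂ (Fin n) → ℝ)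
    (hN : ∀ z, N z = π * ∑ j ∈ Finset.univ.erase (0 : Fin n), k j * ‖z j‖ ^ 2)
    (F : ℝ × ℝ × ℝ → ℝ) (hF : Differentiable ℝ F) (z V : EuclideanSpace ℂ (Fin n))
    (hV : V = Complex.I • gradient
      (fun w : EuclideanSpace ℂ (Fin n) => F ((w 0).re, (w 0).im, N w)) z) :
    (V 0).re = - fderiv ℝ F ((z 0).re, (z 0).im, N z) (0, 1, 0) ∧
    (V 0).im = fderiv ℝ F ((z 0).re, (z 0).im, N z) (1, 0, 0) ∧ dN n k z V = 0 := by
  set D := fderiv ℝ F ((z 0).re, (z 0).im, N z) with hD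
  set g := gradient (fun w : EuclideanSpace ℂ (Fin n) => F ((w 0).re, (w 0).im, N w)) z with hg
  have hd := (hF ((z 0).re, (z 0).im, N z)).hasFDerivAt.comp z
    ((re_coord_hasFDerivAt n z 0).prodMk
      ((im_coord_hasFDerivAt n z 0).prodMk (N_hasFDerivAt n k N hN z)))
  have hin : ∀ v : EuclideanSpace ℂ (Fin n),
      ∑ j, ((g j).re * (v j).re + (g j).im * (v j).im) = D ((v 0).re, (v 0).im, dN n k z v) := by
    intro v
    have h1 : inner ℝ g v =
        fderiv ℝ (fun w : EuclideanSpace ℂ (Fin n) => F ((w 0).re, (w 0).im, N w)) z v := by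
      rw [hg, gradient, InnerProductSpace.toDual_symm_apply]
    have h2 : fderiv ℝ (fun w : EuclideanSpace ℂ (Fin n) => F ((w 0).re, (w 0).im, N w)) z v =
        D ((v 0).re, (v 0).im, dN n k z v) := by
      have := hd.fderiv
      rw [Function.comp_def] at this
      rw [this]
      simp [hD]
    rw [← h2, ← h1, PiLp.inner_apply]
    apply Finset.sum_congr rfl
    intro j _
    rw [inner_complex_real]
  have hsingle : ∀ c : ℂ, ((g 0).re * c.re + (g 0).im * c.im) = D (c.re, c.im, 0) := by
    intro c
    have := hin (EuclideanSpace.single 0 c)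
    rw [Finset.sum_eq_single 0] at this
    · have e : dN n k z (EuclideanSpace.single 0 c) = 0 := by
        rw [dN_apply, Finset.sum_eq_zero]; · simp
        intro j hj
        simp [Finset.ne_of_mem_erase hj]
      rw [e] at this
      simpa using this
    · intro j _ hj
      simp [hj]
    · simp
  refine ⟨?_, ?_, ?_⟩
  · have := hsingle Complex.I
    simp at this
    simp [hV, this]
  · have := hsingle 1
    simp at this
    simp [hV, this]
  · have := hin (WithLp.toLp 2 fun j => if j = 0 then 0 else Complex.I * (2 * k j : ℝ) * z j)
    have e : dN n k z (WithLp.toLp 2 fun j => if j = 0 then 0 else Complex.I * (2 * k j : ℝ) * z j)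
        = 0 := by
      rw [dN_apply, Finset.sum_eq_zero]; · simp
      intro j hj
      simp [Finset.ne_of_mem_erase hj]
      right; ring
    rw [e] at this
    simp only [if_true, Complex.zero_re, Complex.zero_im, Prod.mk_zero_zero, map_zero] at this
    rw [← Finset.add_sum_erase _ _ (Finset.mem_univ (0 : Fin n))] at this
    simp only [if_true, Complex.zero_re, Complex.zero_im, mul_zero, add_zero, zero_add] at this
    rw [dN_apply, hV]
    rw [← neg_eq_zero, ← mul_neg, ← Finset.sum_neg_distrib]
    apply mul_eq_zero_of_right
    rw [← this]
    apply Finset.sum_congr rfl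
    intro j hj
    simp [Finset.ne_of_mem_erase hj]
    ring
lemma dispU_contDiff {P : Type*} [NormedAddCommGroup P] [NormedSpace ℝ P] {ε : ℝ} (hε : 0 < ε)
    {e c C τ x : P → ℝ} (he : ContDiff ℝ (⊤ : ℕ∞) e) (hc : ContDiff ℝ (⊤ : ℕ∞) c)
    (hC : ContDiff ℝ (⊤ : ℕ∞) C) (hτ : ContDiff ℝ (⊤ : ℕ∞) τ) (hx : ContDiff ℝ (⊤ : ℕ∞) x)
    (hτ01 : ∀ p, τ p ∈ Set.Icc (0 : ℝ) 1) :
    ContDiff ℝ (⊤ : ℕ∞) (fun p => dispU ε (e p) (c p) (C p) (τ p) (x p)) := by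
  have hJ : ∀ {f g : P → ℝ}, ContDiff ℝ (⊤ : ℕ∞) f → ContDiff ℝ (⊤ : ℕ∞) g →
      ContDiff ℝ (⊤ : ℕ∞) (fun p => dispJ ε (f p) (g p)) :=
    fun hf hg => (dispJ_contDiff hε).comp (hf.prodMk hg)
  have hH : ∀ {f g : P → ℝ}, ContDiff ℝ (⊤ : ℕ∞) f → ContDiff ℝ (⊤ : ℕ∞) g →
      ContDiff ℝ (⊤ : ℕ∞) (fun p => dispH ε (f p) (g p)) :=
    fun hf hg => (dispH_contDiff hε).comp (hf.prodMk hg)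
  unfold dispU
  apply ContDiff.div
  · exact (((hJ hC hx).sub (hJ hC he)).sub ((hJ hc hx).sub (hJ hc he))).neg
  · exact ((contDiff_const.sub hτ).mul (hH hc hx)).add (hτ.mul (hH hC hx))
  · intro p
    exact (dispDen_pos hε (hτ01 p) _ _ _).ne'

/-- The planar velocity. -/
noncomputable def dispP (ε c1 c2 C t x : ℝ) : ℝ :=
  deriv dispS t * dispU ε (-dispH ε C 0) c1 C (dispS t) x
    - deriv dispS (1 - t) * dispU ε (dispH ε C 0) c2 C (dispS (1 - t)) x

/-- The planar cut-off Hamiltonian, depending on the value `ν` of `N`. -/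
noncomputable def dispGam (ε a b k0 α s : ℝ) (p : ℝ × (ℝ × ℝ × ℝ)) : ℝ :=
  -(Real.smoothTransition ((α - π * k0 * ε - (π * k0 * (p.2.1 ^ 2 + p.2.2.1 ^ 2) + p.2.2.2)) /
      (π * k0 * ε)) * (p.2.2.1 *
    dispP ε ((s - p.2.2.2) / (π * a)) (s / (π * b)) ((α - p.2.2.2) / (π * k0) - 3 * ε) p.1 p.2.1))

lemma deriv_dispS_contDiff : ContDiff ℝ (⊤ : ℕ∞) (deriv dispS) := by
  have := dispS_contDiff
  exact ((contDiff_infty_iff_deriv (𝕜 := ℝ)).1 this).2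

lemma dispGam_contDiff {ε : ℝ} (hε : 0 < ε) (a b k0 α s : ℝ) :
    ContDiff ℝ (⊤ : ℕ∞) (dispGam ε a b k0 α s) := by
  unfold dispGam dispP
  have hC : ContDiff ℝ (⊤ : ℕ∞)
      (fun p : ℝ × (ℝ × ℝ × ℝ) => (α - p.2.2.2) / (π * k0) - 3 * ε) := by fun_prop
  have hL : ContDiff ℝ (⊤ : ℕ∞)
      (fun p : ℝ × (ℝ × ℝ × ℝ) => dispH ε ((α - p.2.2.2) / (π * k0) - 3 * ε) 0) :=
    (dispH_contDiff hε).comp (hC.prodMk contDiff_const)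
  apply ContDiff.neg
  apply ContDiff.mul
  · exact Real.smoothTransition.contDiff.comp (by fun_prop)
  apply ContDiff.mul (by fun_prop)
  apply ContDiff.sub
  · apply ContDiff.mul
    · exact deriv_dispS_contDiff.comp contDiff_fst
    · exact dispU_contDiff hε hL.neg (by fun_prop) hC (dispS_contDiff.comp contDiff_fst)
        (by fun_prop) (fun p => dispS_mem _)
  · apply ContDiff.mul
    · exact deriv_dispS_contDiff.comp (by fun_prop)
    · exact dispU_contDiff hε hL (by fun_prop) hC (dispS_contDiff.comp (by fun_prop))
        (by fun_prop) (fun p => dispS_mem _)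

lemma dispU_diff {ε : ℝ} (hε : 0 < ε) (e c C t x : ℝ) :
    DifferentiableAt ℝ (dispU ε e c C (dispS t)) x :=
  (dispU_contDiff (P := ℝ) hε (e := fun _ => e) (c := fun _ => c) (C := fun _ => C)
    (τ := fun _ => dispS t) (x := fun x => x) contDiff_const contDiff_const contDiff_const
    contDiff_const contDiff_id (fun _ => dispS_mem t)).differentiable (by simp) x

lemma dispGam_partials {ε : ℝ} (hε : 0 < ε) (a b k0 α s : ℝ) (hk0 : 0 < k0) (t x y ν : ℝ)
    (hin : π * k0 * (x ^ 2 + y ^ 2) + ν < α - 2 * (π * k0 * ε)) :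
    fderiv ℝ (fun p => dispGam ε a b k0 α s (t, p)) (x, y, ν) (0, 1, 0) =
      -dispP ε ((s - ν) / (π * a)) (s / (π * b)) ((α - ν) / (π * k0) - 3 * ε) t x ∧
    fderiv ℝ (fun p => dispGam ε a b k0 α s (t, p)) (x, y, ν) (1, 0, 0) =
      -(y * deriv (dispP ε ((s - ν) / (π * a)) (s / (π * b)) ((α - ν) / (π * k0) - 3 * ε) t) x) := by
  have hδ : 0 < π * k0 * ε := by positivity
  set P := dispP ε ((s - ν) / (π * a)) (s / (π * b)) ((α - ν) / (π * k0) - 3 * ε) t with hP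
  have hd : HasFDerivAt (fun p => dispGam ε a b k0 α s (t, p))
      (fderiv ℝ (fun p => dispGam ε a b k0 α s (t, p)) (x, y, ν)) (x, y, ν) :=
    (((dispGam_contDiff hε a b k0 α s).comp (by fun_prop :
      ContDiff ℝ (⊤ : ℕ∞) fun p : ℝ × ℝ × ℝ => (t, p))).differentiable (by simp)
      (x, y, ν)).hasFDerivAt
  have hloc : ∀ x' y' : ℝ, π * k0 * (x' ^ 2 + y' ^ 2) + ν < α - 2 * (π * k0 * ε) →
      dispGam ε a b k0 α s (t, (x', y', ν)) = -(y' * P x') := by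
    intro x' y' h
    unfold dispGam
    rw [Real.smoothTransition.one_of_one_le, one_mul]
    rw [le_div_iff₀ hδ]
    linarith
  constructor
  · have hl : HasDerivAt (fun y' : ℝ => ((x, y', ν) : ℝ × ℝ × ℝ)) (0, 1, 0) y :=
      (hasDerivAt_const y x).prodMk ((hasDerivAt_id y).prodMk (hasDerivAt_const y ν))
    have h1 := hd.comp_hasDerivAt y hl
    have ev : (fun y' : ℝ => -(y' * P x)) =ᶠ[nhds y]
        ((fun p => dispGam ε a b k0 α s (t, p)) ∘ fun y' : ℝ => (x, y', ν)) := by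
      have ho : IsOpen {y' : ℝ | π * k0 * (x ^ 2 + y' ^ 2) + ν < α - 2 * (π * k0 * ε)} :=
        isOpen_lt (by fun_prop) (by fun_prop)
      filter_upwards [ho.mem_nhds hin] with y' hy'
      exact (hloc x y' hy').symm
    have h2 : HasDerivAt (fun y' : ℝ => -(y' * P x)) (-(1 * P x)) y :=
      ((hasDerivAt_id y).mul_const (P x)).neg
    have := (h1.congr_of_eventuallyEq ev).unique h2
    rw [this, one_mul]
  · have hl : HasDerivAt (fun x' : ℝ => ((x', y, ν) : ℝ × ℝ × ℝ)) (1, 0, 0) x :=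
      (hasDerivAt_id x).prodMk ((hasDerivAt_const x y).prodMk (hasDerivAt_const x ν))
    have h1 := hd.comp_hasDerivAt x hl
    have ev : (fun x' : ℝ => -(y * P x')) =ᶠ[nhds x]
        ((fun p => dispGam ε a b k0 α s (t, p)) ∘ fun x' : ℝ => (x', y, ν)) := by
      have ho : IsOpen {x' : ℝ | π * k0 * (x' ^ 2 + y ^ 2) + ν < α - 2 * (π * k0 * ε)} :=
        isOpen_lt (by fun_prop) (by fun_prop)
      filter_upwards [ho.mem_nhds hin] with x' hx'
      exact (hloc x' y hx').symm
    have hPd : DifferentiableAt ℝ P x :=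
      ((dispU_diff hε _ _ _ _ _).const_mul _).sub ((dispU_diff hε _ _ _ _ _).const_mul _)
    have h2 : HasDerivAt (fun x' : ℝ => -(y * P x')) (-(y * deriv P x)) x :=
      (hPd.hasDerivAt.const_mul y).neg
    exact (h1.congr_of_eventuallyEq ev).unique h2

lemma dispP_deriv {ε : ℝ} (hε : 0 < ε) (c1 c2 C t x : ℝ) :
    deriv (dispP ε c1 c2 C t) x =
      deriv dispS t * deriv (dispU ε (-dispH ε C 0) c1 C (dispS t)) x
    - deriv dispS (1 - t) * deriv (dispU ε (dispH ε C 0) c2 C (dispS (1 - t))) x :=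
  (((dispU_diff hε _ _ _ _ _).hasDerivAt.const_mul _).sub
    ((dispU_diff hε _ _ _ _ _).hasDerivAt.const_mul _)).deriv

/-- choice of the small parameter -/
lemma choose_eps {A μ : ℝ} (hμ : 0 < μ) :
    ∃ ε > 0, 4 * A * √(ε / 2) ≤ π / 2 * (μ - 3 * ε) ∧ 3 * ε < μ := by
  have hcont : Continuous fun ε : ℝ => π / 2 * (μ - 3 * ε) - 4 * A * √(ε / 2) := by fun_prop
  have hcont2 : Continuous fun ε : ℝ => μ - 3 * ε := by fun_prop
  have h1 : ∀ᶠ ε in nhds (0 : ℝ), 0 < π / 2 * (μ - 3 * ε) - 4 * A * √(ε / 2) :=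
    hcont.continuousAt.eventually (lt_mem_nhds (by simp; positivity))
  have h2 : ∀ᶠ ε in nhds (0 : ℝ), 0 < μ - 3 * ε :=
    hcont2.continuousAt.eventually (lt_mem_nhds (by simpa using hμ))
  have h3 := ((h1.and h2).filter_mono (nhdsWithin_le_nhds (s := Set.Ioi 0))).and
    self_mem_nhdsWithin
  obtain ⟨ε, ⟨ha, hb⟩, hc⟩ := h3.exists
  exact ⟨ε, hc, by linarith, by linarith⟩

lemma E_bounded (n : ℕ) [NeZero n] (k : Fin n → ℝ) (hk : ∀ j, 0 < k j)
    (N : EuclideanSpace ℂ (Fin n) → ℝ)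
    (hN : ∀ z, N z = π * ∑ j ∈ Finset.univ.erase (0 : Fin n), k j * ‖z j‖ ^ 2) (r : ℝ) :
    IsCompact {z : EuclideanSpace ℂ (Fin n) | π * k 0 * ‖z 0‖ ^ 2 + N z ≤ r} := by
  haveI : ProperSpace (EuclideanSpace ℂ (Fin n)) := FiniteDimensional.proper ℂ _
  apply Metric.isCompact_of_isClosed_isBounded
  · apply isClosed_le _ continuous_const
    have := (N_contDiff n k N hN).continuous
    fun_prop
  · apply (Metric.isBounded_closedBall (x := (0 : EuclideanSpace ℂ (Fin n)))
      (r := √(∑ j, r / (π * k j)))).subset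
    intro z hz
    simp only [Set.mem_setOf_eq] at hz
    rw [mem_closedBall_zero_iff]
    apply Real.le_sqrt_of_sq_le
    rw [EuclideanSpace.norm_sq_eq]
    apply Finset.sum_le_sum
    intro j _
    have hkj := hk j
    rw [le_div_iff₀ (by positivity)]
    have hsum : π * k 0 * ‖z 0‖ ^ 2 + N z = π * ∑ j, k j * ‖z j‖ ^ 2 := by
      rw [hN, ← Finset.add_sum_erase _ _ (Finset.mem_univ (0 : Fin n))]; ring
    rw [hsum] at hz
    have := Finset.single_le_sum (f := fun j => k j * ‖z j‖ ^ 2)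
      (fun i _ => mul_nonneg (hk i).le (sq_nonneg _)) (Finset.mem_univ j)
    have := mul_le_mul_of_nonneg_left this Real.pi_pos.le
    simp only at this
    linarith

lemma ham_contDiff (n : ℕ) (G : ℝ × EuclideanSpace ℂ (Fin n) → ℝ) (hG : ContDiff ℝ (⊤ : ℕ∞) G)
    (hc : HasCompactSupport G) :
    ContDiff ℝ 1 (fun p : ℝ × EuclideanSpace ℂ (Fin n) =>
      Complex.I • gradient (fun w => G (p.1, w)) p.2) ∧
    HasCompactSupport (fun p : ℝ × EuclideanSpace ℂ (Fin n) =>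
      Complex.I • gradient (fun w => G (p.1, w)) p.2) := by
  let T₀ : (EuclideanSpace ℂ (Fin n) →L[ℝ] ℝ) →ₗ[ℝ] EuclideanSpace ℂ (Fin n) :=
    { toFun := fun l => Complex.I • (InnerProductSpace.toDual ℝ (EuclideanSpace ℂ (Fin n))).symm l
      map_add' := by intro x y; simp
      map_smul' := by
        intro m x
        rw [map_smulₛₗ, RingHom.id_apply, smul_comm]
        simp only [conj_trivial] }
  let T : (EuclideanSpace ℂ (Fin n) →L[ℝ] ℝ) →L[ℝ] EuclideanSpace ℂ (Fin n) :=
    T₀.mkContinuous 1 (by intro x; simp [T₀, norm_smul])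
  have hfd : ∀ p : ℝ × EuclideanSpace ℂ (Fin n),
      Complex.I • gradient (fun w => G (p.1, w)) p.2 =
      T ((fderiv ℝ G p).comp (ContinuousLinearMap.inr ℝ ℝ (EuclideanSpace ℂ (Fin n)))) := by
    intro p
    have h1 : HasFDerivAt (fun w => G (p.1, w))
        ((fderiv ℝ G p).comp (ContinuousLinearMap.inr ℝ ℝ (EuclideanSpace ℂ (Fin n)))) p.2 := by
      have h2 : HasFDerivAt G (fderiv ℝ G p) (p.1, p.2) :=
        (hG.differentiable (by simp) p).hasFDerivAt
      exact h2.comp p.2 (hasFDerivAt_prodMk_right p.1 p.2)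
    rw [gradient, h1.fderiv]
    rfl
  have hrw : (fun p : ℝ × EuclideanSpace ℂ (Fin n) =>
      Complex.I • gradient (fun w => G (p.1, w)) p.2) = fun p =>
      T ((fderiv ℝ G p).comp (ContinuousLinearMap.inr ℝ ℝ (EuclideanSpace ℂ (Fin n)))) :=
    funext hfd
  rw [hrw]
  constructor
  · apply T.contDiff.comp
    apply ContDiff.clm_comp _ contDiff_const
    exact hG.fderiv_right (by norm_cast)
  · refine HasCompactSupport.intro hc ?_
    intro p hp
    rw [fderiv_of_notMem_tsupport ℝ hp, ContinuousLinearMap.zero_comp, map_zero]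


theorem stmt_7 (n : ℕ) [NeZero n] (hn : 2 ≤ n) (k : Fin n → ℝ) (hk : ∀ j, 0 < k j)
    (N : EuclideanSpace ℂ (Fin n) → ℝ)
    (hN : ∀ z, N z = π * ∑ j ∈ Finset.univ.erase (0 : Fin n), k j * ‖z j‖ ^ 2)
    (a b : ℝ) (ha : 0 < a) (hb : 0 < b) (hab : a + b = k 0)
    (α s : ℝ) (hα : 0 < α) (hs : 0 < s) (hsk : s * k 0 ^ 2 < a * b * α) :
    ∃ (G : ℝ × EuclideanSpace ℂ (Fin n) → ℝ)
      (K : Set (EuclideanSpace ℂ (Fin n)))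
      (bFlow : ℝ → EuclideanSpace ℂ (Fin n) → EuclideanSpace ℂ (Fin n)),
      ContDiff ℝ (⊤ : ℕ∞) G ∧ IsCompact K ∧
      K ⊆ {z : EuclideanSpace ℂ (Fin n) | π * k 0 * ‖z 0‖ ^ 2 + N z < α} ∧
      (∀ (t : ℝ) (z : EuclideanSpace ℂ (Fin n)), z ∉ K → G (t, z) = 0) ∧
      bFlow 0 = id ∧
      (∀ (z : EuclideanSpace ℂ (Fin n)) (t : ℝ),
        HasDerivAt (fun s' => bFlow s' z) (Complex.I • gradient (fun w => G (t, w)) (bFlow t z)) t) ∧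
      (∀ (t : ℝ) (z : EuclideanSpace ℂ (Fin n)), N (bFlow t z) = N z) ∧
      Disjoint
        (bFlow 1 '' {z : EuclideanSpace ℂ (Fin n) |
          π * k 0 * ‖z 0‖ ^ 2 + N z < α ∧ π * a * ‖z 0‖ ^ 2 + N z < s})
        {z : EuclideanSpace ℂ (Fin n) |
          π * k 0 * ‖z 0‖ ^ 2 + N z < α ∧ π * b * ‖z 0‖ ^ 2 < s} := by
  have hk0 := hk 0
  have hpi := Real.pi_pos
  set k0 := k 0 with hk0def
  have hnorm : ∀ w : ℂ, ‖w‖ ^ 2 = w.re ^ 2 + w.im ^ 2 := by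
    intro w; rw [Complex.sq_norm, Complex.normSq_apply]; ring
  have hμ : 0 < (α / k0 - s * k0 / (a * b)) / π := by
    apply div_pos _ hpi
    rw [sub_pos, div_lt_div_iff₀ (by positivity) hk0]
    nlinarith
  obtain ⟨ε, hε, hε1, hε2⟩ := choose_eps (A := √(α / (π * k0))) hμ
  have hδ : 0 < π * k0 * ε := by positivity
  have hNc := N_contDiff n k N hN
  set G : ℝ × EuclideanSpace ℂ (Fin n) → ℝ :=
    fun p => dispGam ε a b k0 α s (p.1, ((p.2 0).re, (p.2 0).im, N p.2)) with hG
  set K : Set (EuclideanSpace ℂ (Fin n)) :=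
    {z | π * k0 * ‖z 0‖ ^ 2 + N z ≤ α - π * k0 * ε} with hKdef
  have hK : IsCompact K := E_bounded n k hk N hN _
  have hGc : ContDiff ℝ (⊤ : ℕ∞) G := by
    apply (dispGam_contDiff hε a b k0 α s).comp
    apply contDiff_fst.prodMk
    have hre : ContDiff ℝ (⊤ : ℕ∞) fun w : EuclideanSpace ℂ (Fin n) => (w 0).re :=
      (Complex.reCLM.comp (PiLp.proj 2 (fun _ : Fin n => ℂ) 0 : _ →L[ℝ] ℂ)).contDiff
    have him : ContDiff ℝ (⊤ : ℕ∞) fun w : EuclideanSpace ℂ (Fin n) => (w 0).im :=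
      (Complex.imCLM.comp (PiLp.proj 2 (fun _ : Fin n => ℂ) 0 : _ →L[ℝ] ℂ)).contDiff
    exact (hre.comp contDiff_snd).prodMk ((him.comp contDiff_snd).prodMk (hNc.comp contDiff_snd))
  have hG0 : ∀ (t : ℝ) (z : EuclideanSpace ℂ (Fin n)), z ∉ K → G (t, z) = 0 := by
    intro t z hz
    simp only [hKdef, Set.mem_setOf_eq, not_le, hnorm] at hz
    simp only [hG, dispGam]
    rw [Real.smoothTransition.zero_of_nonpos]
    · simp
    · apply div_nonpos_of_nonpos_of_nonneg _ hδ.le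
      linarith
  have hGt : ∀ (t : ℝ) (z : EuclideanSpace ℂ (Fin n)), t ∉ Set.Icc (0 : ℝ) 1 → G (t, z) = 0 := by
    intro t z ht
    simp only [hG, dispGam, dispP]
    rw [Set.mem_Icc, not_and_or, not_le, not_le] at ht
    rcases ht with ht | ht
    · rw [deriv_dispS_neg ht, deriv_dispS_big (show 1 / 2 ≤ 1 - t by linarith)]; simp
    · rw [deriv_dispS_big (show 1 / 2 ≤ t by linarith),
        deriv_dispS_neg (show 1 - t < 0 by linarith)]; simp
  have hGs : HasCompactSupport G := by
    apply HasCompactSupport.intro ((isCompact_Icc (a := (0 : ℝ)) (b := 1)).prod hK)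
    rintro ⟨t, z⟩ h
    rw [Set.mem_prod, not_and_or] at h
    rcases h with h | h
    · exact hGt t z h
    · exact hG0 t z h
  obtain ⟨hV1, hV2⟩ := ham_contDiff n G hGc hGs
  obtain ⟨φ, hφ0, hφ⟩ := exists_global_flow _ hV1 hV2
  simp only at hφ
  have hFd : ∀ t, Differentiable ℝ (fun p => dispGam ε a b k0 α s (t, p)) := fun t =>
    ((dispGam_contDiff hε a b k0 α s).comp (by fun_prop :
      ContDiff ℝ (⊤ : ℕ∞) fun p : ℝ × ℝ × ℝ => (t, p))).differentiable (by simp)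
  have facts := fun t z => grad_facts n k N hN _ (hFd t) (φ t z) _ rfl
  have hNφ : ∀ (t : ℝ) (z : EuclideanSpace ℂ (Fin n)), N (φ t z) = N z := by
    intro t z
    have hd : ∀ t, HasDerivAt (fun u => N (φ u z)) 0 t := by
      intro t
      have := (N_hasFDerivAt n k N hN (φ t z)).comp_hasDerivAt t (hφ z t)
      rw [(facts t z).2.2] at this
      exact this
    have := is_const_of_deriv_eq_zero (fun t => (hd t).differentiableAt)
      (fun t => (hd t).deriv) t 0
    simp only [hφ0, id] at this
    exact this
  refine ⟨G, K, φ, hGc, hK, ?_, hG0, hφ0, hφ, hNφ, ?_⟩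
  · intro z hz
    simp only [hKdef, Set.mem_setOf_eq] at hz ⊢
    linarith
  rw [Set.disjoint_left]
  rintro _ ⟨z, ⟨hz1, hz2⟩, rfl⟩ ⟨_, hw2⟩
  have hν0 : 0 ≤ N z := by
    rw [hN]
    exact mul_nonneg hpi.le (Finset.sum_nonneg fun j _ => mul_nonneg (hk j).le (sq_nonneg _))
  have hpa : 0 < π * a := by positivity
  have hpb : 0 < π * b := by positivity
  have hpk : 0 < π * k0 := by positivity
  have hνs : N z < s := by
    have := mul_nonneg hpa.le (sq_nonneg ‖z 0‖)
    linarith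
  set ν := N z with hν
  have hgap : (s - ν) / (π * a) + s / (π * b) + (α / k0 - s * k0 / (a * b)) / π - 3 * ε ≤
      (α - ν) / (π * k0) - 3 * ε := by
    have e1 : (α - ν) / (π * k0) - ((s - ν) / (π * a) + s / (π * b)
        + (α / k0 - s * k0 / (a * b)) / π) = ν * b / (π * a * k0) := by
      rw [← hab]
      have : a + b ≠ 0 := by positivity
      field_simp
      ring
    have : 0 ≤ ν * b / (π * a * k0) := by positivity
    linarith
  have hc1 : 0 < (s - ν) / (π * a) := div_pos (by linarith) hpa
  have hc2 : 0 < s / (π * b) := div_pos hs hpb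
  have hCle : (α - ν) / (π * k0) ≤ α / (π * k0) := by gcongr; linarith
  set c1 := (s - ν) / (π * a) with hc1def
  set c2 := s / (π * b) with hc2def
  set C := (α - ν) / (π * k0) - 3 * ε with hCdef
  set μ := (α / k0 - s * k0 / (a * b)) / π
  have hCpos : 0 < C := by linarith
  obtain ⟨hL1, hL2⟩ := dispL_sq hε hCpos
  have hLpos := dispH_pos hε C 0
  refine planar_disp hε (c1 := c1) (c2 := c2) (C := C) hCpos (by linarith) (by linarith) ?_
    (fun t => (φ t z 0).re) (fun t => (φ t z 0).im) ?_ ?_ ?_ ?_ ?_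
  · have m1 := mass_le hε hc1 hLpos (by linarith)
    have m2 := mass_le hε hc2 hLpos (by linarith)
    have m3 := le_mass hε hCpos hLpos hL1
    have hLA : dispH ε C 0 ≤ √(α / (π * k0)) := by
      apply Real.le_sqrt_of_sq_le
      linarith
    have m4 := mul_le_mul_of_nonneg_right hLA (Real.sqrt_nonneg (ε / 2))
    have m5 : π / 2 * (c1 + c2 + μ - 3 * ε) ≤ π / 2 * C :=
      mul_le_mul_of_nonneg_left hgap (by positivity)
    linarith
  · have : Continuous fun t => φ t z :=
      continuous_iff_continuousAt.2 fun t => (hφ z t).continuousAt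
    fun_prop
  · have : Continuous fun t => φ t z :=
      continuous_iff_continuousAt.2 fun t => (hφ z t).continuousAt
    fun_prop
  · intro t hin
    have hin' : π * k0 * ((φ t z 0).re ^ 2 + (φ t z 0).im ^ 2) + ν < α - 2 * (π * k0 * ε) := by
      have h1 := mul_lt_mul_of_pos_left hin hpk
      have h2 : π * k0 * (C + ε) = α - ν - 2 * (π * k0 * ε) := by
        rw [hCdef]; field_simp; ring
      linarith
    obtain ⟨p1, p2⟩ := dispGam_partials hε a b k0 α s hk0 t _ _ _ hin'
    obtain ⟨f1, f2, -⟩ := facts t z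
    rw [hNφ t z] at f1 f2
    rw [← hν, p1] at f1
    rw [← hν, p2, dispP_deriv hε] at f2
    have d1 := (re_coord_hasFDerivAt n (φ t z) 0).comp_hasDerivAt t (hφ z t)
    have d2 := (im_coord_hasFDerivAt n (φ t z) 0).comp_hasDerivAt t (hφ z t)
    refine ⟨d1.congr_deriv ?_, d2.congr_deriv ?_⟩
    · rw [neg_neg] at f1
      exact f1
    · exact f2
  · simp only [hφ0, id]
    rw [← hnorm, hc1def, lt_div_iff₀ hpa]
    linarith
  · simp only
    rw [← hnorm, hc2def, lt_div_iff₀ hpb]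
    linarith
end

section
/- Let a and b be positive integers and let λ ∈ ℂ. Define φ̄ : ℝ → ℂ → ℂ by φ̄ t z = exp(−2πi·a·t)·(exp(−2πi·b·t)·(z − λ) + λ), and define the time-dependent Hamiltonian H̄ : ℝ × ℂ → ℝ by H̄ t z = −π·(a·|z|² + b·|exp(2πi·a·t)·z − λ|²). Then: (i) φ̄ 0 = id and φ̄ 1 = id (so φ̄ is a loop based at the identity); and (ii) φ̄ is a Hamiltonian flow of H̄, i.e. for every z ∈ ℂ and t ∈ ℝ the curve s ↦ φ̄ s z has derivative Complex.I * ∇(H̄ t) (φ̄ t z) at time t. -/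
open Real

theorem grad_aux (a b : ℝ) (e e' lam z : ℂ) (he' : e' = (starRingEnd ℂ) e) (he : e' * e = 1) :
    HasGradientAt (fun z : ℂ => -π * (a * ‖z‖ ^ 2 + b * ‖e * z - lam‖ ^ 2))
      (-(2 * (π : ℂ)) * ((a + b) * z - b * e' * lam)) z := by
  rw [hasGradientAt_iff_hasFDerivAt]
  have h1 : HasFDerivAt (fun z : ℂ => z) (ContinuousLinearMap.id ℝ ℂ) z := hasFDerivAt_id z
  have h2 : HasFDerivAt (fun z : ℂ => e * z - lam) (e • ContinuousLinearMap.id ℝ ℂ) z :=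
    (h1.const_mul e).sub_const lam
  have h3 := ((h1.norm_sq.const_mul a).add (h2.norm_sq.const_mul b)).const_mul (-π)
  refine h3.congr_fderiv ?_
  ext w
  have key : -(2 * (π : ℂ)) * ((a + b) * z - b * e' * lam) =
      -(2 * (π : ℂ)) * (a * z + b * (e' * (e * z - lam))) := by
    linear_combination (2 * (π : ℂ)) * b * z * he
  rw [key, he']
  simp [Complex.inner]
  ring


/-- with `a, b` positive integers and `λ ∈ ℂ`, the loop
`φ̄ t z = exp(−2πi a t)(exp(−2πi b t)(z − λ) + λ)` is based at the identity (`φ̄ 0 = φ̄ 1 = id`)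
and is the Hamiltonian flow of `H̄ t z = −π (a|z|² + b|exp(2πi a t) z − λ|²)`. -/
theorem stmt_9 (a b : ℕ) (ha : 0 < a) (hb : 0 < b) (lam : ℂ)
    (phibar : ℝ → ℂ → ℂ)
    (hphibar : ∀ (t : ℝ) (z : ℂ), phibar t z =
      Complex.exp (-(2 * (π : ℂ) * Complex.I) * (a : ℂ) * (t : ℂ)) *
        (Complex.exp (-(2 * (π : ℂ) * Complex.I) * (b : ℂ) * (t : ℂ)) * (z - lam) + lam))
    (Hbar : ℝ → ℂ → ℝ)
    (hHbar : ∀ (t : ℝ) (z : ℂ), Hbar t z =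
      -π * ((a : ℝ) * ‖z‖ ^ 2 +
        (b : ℝ) * ‖Complex.exp ((2 * (π : ℂ) * Complex.I) * (a : ℂ) * (t : ℂ)) * z - lam‖ ^ 2)) :
    phibar 0 = id ∧ phibar 1 = id ∧
    (∀ (z : ℂ) (t : ℝ),
      HasDerivAt (fun s => phibar s z) (Complex.I * gradient (Hbar t) (phibar t z)) t) := by
  have hp : ∀ n : ℕ, Complex.exp (-(2 * (π : ℂ) * Complex.I) * (n : ℂ)) = 1 := by
    intro n
    have := Complex.exp_int_mul_two_pi_mul_I (-(n : ℤ))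
    rw [← this]
    congr 1
    push_cast
    ring
  refine ⟨?_, ?_, ?_⟩
  · funext z
    simp [hphibar]
  · funext z
    rw [hphibar]
    simp only [Complex.ofReal_one, mul_one, hp]
    simp
  · intro z t
    have hexp : ∀ n : ℕ, HasDerivAt
        (fun s : ℝ => Complex.exp (-(2 * (π : ℂ) * Complex.I) * (n : ℂ) * (s : ℂ)))
        (Complex.exp (-(2 * (π : ℂ) * Complex.I) * (n : ℂ) * (t : ℂ)) *
          (-(2 * (π : ℂ) * Complex.I) * (n : ℂ))) t := by
      intro n
      have h0 : HasDerivAt (fun s : ℝ => (s : ℂ)) 1 t := Complex.ofRealCLM.hasDerivAt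
      have h1 := (h0.const_mul (-(2 * (π : ℂ) * Complex.I) * (n : ℂ))).cexp
      simpa using h1
    have hg := grad_aux a b (Complex.exp ((2 * (π : ℂ) * Complex.I) * (a : ℂ) * (t : ℂ)))
      (Complex.exp (-(2 * (π : ℂ) * Complex.I) * (a : ℂ) * (t : ℂ))) lam (phibar t z)
      (by rw [← Complex.exp_conj]; simp [Complex.conj_ofNat])
      (by rw [← Complex.exp_add, ← Complex.exp_zero]; congr 1; ring)
    have hH : Hbar t = _ := funext (hHbar t)
    rw [hH, hg.gradient]
    have hf : (fun s => phibar s z) = _ := funext (fun s => hphibar s z)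
    rw [hf]
    refine ((hexp a).mul (((hexp b).mul_const (z - lam)).add_const lam)).congr_deriv ?_
    rw [hphibar]
    push_cast
    ring
end

section
/- Let a, b, c be positive integers and let λ, μ ∈ ℂ. Define φ̄ : ℝ → ℂ → ℂ by φ̄ t z = exp(−2πi·a·t)·(λ + exp(−2πi·b·t)·(μ + exp(−2πi·c·t)·(z − λ − μ))), and define the time-dependent Hamiltonian H̄ : ℝ × ℂ → ℝ by H̄ t z = −π·(a·|z|² + b·|exp(2πi·a·t)·z − λ|² + c·|exp(2πi·(a+b)·t)·z − exp(2πi·b·t)·λ − μ|²). Then: (i) φ̄ 0 = id and φ̄ 1 = id; and (ii) φ̄ is a Hamiltonian flow of H̄, i.e. for every z ∈ ℂ and t ∈ ℝ the curve s ↦ φ̄ s z has derivative Complex.I * ∇(H̄ t) (φ̄ t z) at time t. -/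
open Real


lemma fderiv_aux (u w z : ℂ) :
    HasFDerivAt (fun z : ℂ => ‖u * z - w‖ ^ 2)
      (InnerProductSpace.toDual ℝ ℂ (2 * (starRingEnd ℂ u * (u * z - w)))) z := by
  have h1 : HasFDerivAt (fun z : ℂ => u * z - w) (u • ContinuousLinearMap.id ℝ ℂ) z := by
    have := ((hasFDerivAt_id (𝕜 := ℝ) z).const_mul u).sub_const w
    simpa using this
  have h2 := h1.norm_sq
  refine h2.congr_fderiv ?_
  refine ContinuousLinearMap.ext fun v => ?_
  simp [Complex.inner]
  ring

lemma grad_aux_s10 (A B C : ℝ) (u w u' w' z : ℂ) :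
    gradient (fun z : ℂ => -π * (A * ‖z‖ ^ 2 + B * ‖u * z - w‖ ^ 2 + C * ‖u' * z - w'‖ ^ 2)) z =
      -(2 * π) * (A * z + B * (starRingEnd ℂ u * (u * z - w))
        + C * (starRingEnd ℂ u' * (u' * z - w'))) := by
  apply HasGradientAt.gradient
  rw [hasGradientAt_iff_hasFDerivAt]
  have h0 := fderiv_aux 1 0 z
  simp only [one_mul, sub_zero, map_one] at h0
  have := (((h0.const_mul A).add ((fderiv_aux u w z).const_mul B)).add
    ((fderiv_aux u' w' z).const_mul C)).const_mul (-π)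
  refine HasFDerivAt.congr_fderiv this ?_
  rw [← map_smul, ← map_smul, ← map_smul, ← map_add, ← map_add, ← map_smul]
  congr 1
  simp only [Complex.real_smul]
  push_cast
  ring

lemma conj_exp_aux (r : ℂ) (hr : starRingEnd ℂ r = r) :
    starRingEnd ℂ (Complex.exp (2 * (π : ℂ) * Complex.I * r)) =
      Complex.exp (-(2 * (π : ℂ) * Complex.I) * r) := by
  rw [← Complex.exp_conj]
  have h2 : starRingEnd ℂ 2 = 2 := Complex.conj_ofNat 2
  simp [hr, Complex.conj_ofReal, h2]

lemma exp_one_aux (n : ℕ) : Complex.exp (-(2 * (π : ℂ) * Complex.I) * (n : ℂ)) = 1 := by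
  rw [Complex.exp_eq_one_iff]
  exact ⟨-n, by push_cast; ring⟩

lemma deriv_aux (n : ℂ) (t : ℝ) :
    HasDerivAt (fun s : ℝ => Complex.exp (-(2 * (π : ℂ) * Complex.I) * n * (s : ℂ)))
      (Complex.exp (-(2 * (π : ℂ) * Complex.I) * n * (t : ℂ)) * (-(2 * (π : ℂ) * Complex.I) * n))
      t := by
  have h : HasDerivAt (fun s : ℝ => -(2 * (π : ℂ) * Complex.I) * n * (s : ℂ))
      (-(2 * (π : ℂ) * Complex.I) * n) t := by
    simpa using (Complex.ofRealCLM.hasDerivAt (x := t)).const_mul (-(2 * (π : ℂ) * Complex.I) * n)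
  exact h.cexp

/-- with `a, b, c` positive integers and `λ, μ ∈ ℂ`, the loop
`φ̄ t z = exp(−2πi a t)(λ + exp(−2πi b t)(μ + exp(−2πi c t)(z − λ − μ)))` is based at the
identity (`φ̄ 0 = φ̄ 1 = id`) and is the Hamiltonian flow of
`H̄ t z = −π (a|z|² + b|exp(2πi a t) z − λ|² + c|exp(2πi(a+b)t) z − exp(2πi b t) λ − μ|²)`. -/
theorem stmt_10 (a b c : ℕ) (ha : 0 < a) (hb : 0 < b) (hc : 0 < c) (lam mu : ℂ)
    (phibar : ℝ → ℂ → ℂ)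
    (hphibar : ∀ (t : ℝ) (z : ℂ), phibar t z =
      Complex.exp (-(2 * (π : ℂ) * Complex.I) * (a : ℂ) * (t : ℂ)) *
        (lam + Complex.exp (-(2 * (π : ℂ) * Complex.I) * (b : ℂ) * (t : ℂ)) *
          (mu + Complex.exp (-(2 * (π : ℂ) * Complex.I) * (c : ℂ) * (t : ℂ)) * (z - lam - mu))))
    (Hbar : ℝ → ℂ → ℝ)
    (hHbar : ∀ (t : ℝ) (z : ℂ), Hbar t z =
      -π * ((a : ℝ) * ‖z‖ ^ 2 +
        (b : ℝ) * ‖Complex.exp ((2 * (π : ℂ) * Complex.I) * (a : ℂ) * (t : ℂ)) * z - lam‖ ^ 2 +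
        (c : ℝ) * ‖Complex.exp ((2 * (π : ℂ) * Complex.I) * ((a : ℂ) + (b : ℂ)) * (t : ℂ)) * z -
          Complex.exp ((2 * (π : ℂ) * Complex.I) * (b : ℂ) * (t : ℂ)) * lam - mu‖ ^ 2)) :
    phibar 0 = id ∧ phibar 1 = id ∧
    (∀ (z : ℂ) (t : ℝ),
      HasDerivAt (fun s => phibar s z) (Complex.I * gradient (Hbar t) (phibar t z)) t) := by
  refine ⟨?_, ?_, ?_⟩
  · funext z
    simp [hphibar]
  · funext z
    rw [hphibar]
    simp only [Complex.ofReal_one, mul_one, exp_one_aux, id]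
    ring
  · intro z t
    have hH : Hbar t = fun z : ℂ => -π * ((a : ℝ) * ‖z‖ ^ 2 +
        (b : ℝ) * ‖Complex.exp ((2 * (π : ℂ) * Complex.I) * ((a : ℂ) * (t : ℂ))) * z - lam‖ ^ 2 +
        (c : ℝ) * ‖Complex.exp ((2 * (π : ℂ) * Complex.I) * (((a : ℂ) + (b : ℂ)) * (t : ℂ))) * z -
          (Complex.exp ((2 * (π : ℂ) * Complex.I) * (b : ℂ) * (t : ℂ)) * lam + mu)‖ ^ 2) := by
      funext z
      rw [hHbar]
      simp only [mul_assoc, sub_sub]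
    rw [hH, grad_aux_s10, conj_exp_aux _ (by simp), conj_exp_aux _ (by simp)]
    have hd := (deriv_aux a t).mul (((deriv_aux b t).mul
      (((deriv_aux c t).mul_const (z - lam - mu)).const_add mu)).const_add lam)
    have hf : (fun s => phibar s z) = _ := funext fun s => hphibar s z
    rw [hf]
    refine hd.congr_deriv ?_
    rw [hphibar]
    simp only [Pi.mul_apply]
    have e1 : ∀ n : ℂ, Complex.exp (2 * (π : ℂ) * Complex.I * n) *
        Complex.exp (-(2 * (π : ℂ) * Complex.I) * n) = 1 := by
      intro n
      rw [← Complex.exp_add, ← Complex.exp_zero]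
      congr 1
      ring
    have ea := e1 (a * t)
    have eb := e1 (b * t)
    simp only [add_mul, mul_add (2 * (π : ℂ) * Complex.I), mul_add (-(2 * (π : ℂ) * Complex.I)),
      Complex.exp_add, mul_assoc (2 * (π : ℂ) * Complex.I),
      mul_assoc (-(2 * (π : ℂ) * Complex.I))]
    simp only [Complex.ofReal_natCast]
    generalize Complex.exp (2 * (π : ℂ) * Complex.I * (a * t)) = A at *
    generalize Complex.exp (2 * (π : ℂ) * Complex.I * (b * t)) = B at *
    generalize Complex.exp (-(2 * (π : ℂ) * Complex.I) * (a * t)) = A' at *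
    generalize Complex.exp (-(2 * (π : ℂ) * Complex.I) * (b * t)) = B' at *
    generalize Complex.exp (-(2 * (π : ℂ) * Complex.I) * (c * t)) = C' at *
    have k1 : A * (A' * (lam + B' * (mu + C' * (z - lam - mu)))) - lam
        = B' * (mu + C' * (z - lam - mu)) := by
      linear_combination (lam + B' * (mu + C' * (z - lam - mu))) * ea
    have k2 : A * B * (A' * (lam + B' * (mu + C' * (z - lam - mu)))) - (B * lam + mu)
        = C' * (z - lam - mu) := by
      linear_combination B * (lam + B' * (mu + C' * (z - lam - mu))) * ea
        + (mu + C' * (z - lam - mu)) * eb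
    rw [k1, k2]
    ring
end

section
/- Let k ≥ 2 be an integer and let λ = (λ₁, …, λ_{k−1}) ∈ ℂ^{k−1}. Let φ t z = exp(−2πi·t)·z and β_μ z = z + μ. Define the loop φ̄ : ℝ → ℂ → ℂ as the composition φ̄ t = φ t ∘ β_{λ_{k−1}} ∘ φ t ∘ β_{λ_{k−2}} ∘ ⋯ ∘ φ t ∘ β_{λ₁} ∘ φ t ∘ β_{−(λ₁+⋯+λ_{k−1})}. Define w₀(t, z) = z and w_m(t, z) = exp(2πi·t)·w_{m−1}(t, z) − λ_{k−m} for 1 ≤ m ≤ k−1, and set H̄ t z = −π·Σ_{m=0}^{k−1} |w_m(t, z)|². Then: (i) φ̄ 0 = id and φ̄ 1 = id; (ii) when λ = 0, φ̄ t z = exp(−2πi·k·t)·z; and (iii) φ̄ is a Hamiltonian flow of H̄, i.e. for every z ∈ ℂ and t ∈ ℝ the curve s ↦ φ̄ s z has derivative Complex.I * ∇(H̄ t) (φ̄ t z) at time t. -/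
open Real

/-- `Fseq k λ t m` is the composition `φ t ∘ β_{λ_m} ∘ φ t ∘ ⋯ ∘ β_{λ₁} ∘ φ t`
(with `m + 1` factors of the rotation `φ t z = exp(−2πi t) z`, interleaved with the
translations `β_{λ_j} z = z + λ_j`).  Here `λ_j = lam ⟨j − 1, _⟩` for `1 ≤ j ≤ k − 1`. -/
noncomputable def Fseq (k : ℕ) (lam : Fin (k - 1) → ℂ) (t : ℝ) : ℕ → ℂ → ℂ
  | 0, z => Complex.exp (-(2 * (π : ℂ) * Complex.I) * (t : ℂ)) * z
  | m + 1, z => Complex.exp (-(2 * (π : ℂ) * Complex.I) * (t : ℂ)) *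
      (Fseq k lam t m z + if h : m < k - 1 then lam ⟨m, h⟩ else 0)

/-- The loop `φ̄ t = φ t ∘ β_{λ_{k−1}} ∘ φ t ∘ ⋯ ∘ β_{λ₁} ∘ φ t ∘ β_{−(λ₁+⋯+λ_{k−1})}`. -/
noncomputable def phibar (k : ℕ) (lam : Fin (k - 1) → ℂ) (t : ℝ) (z : ℂ) : ℂ :=
  Fseq k lam t (k - 1) (z - ∑ j, lam j)

/-- `wseq k λ t z m = w_m(t, z)`, where `w₀(t,z) = z` and
`w_m(t,z) = exp(2πi t) w_{m−1}(t,z) − λ_{k−m}`. -/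
noncomputable def wseq (k : ℕ) (lam : Fin (k - 1) → ℂ) (t : ℝ) (z : ℂ) : ℕ → ℂ
  | 0 => z
  | m + 1 => Complex.exp ((2 * (π : ℂ) * Complex.I) * (t : ℂ)) * wseq k lam t z m -
      if h : k - (m + 1) - 1 < k - 1 then lam ⟨k - (m + 1) - 1, h⟩ else 0

/-- The Hamiltonian `H̄ t z = −π Σ_{m=0}^{k−1} |w_m(t, z)|²`. -/
noncomputable def Hbar (k : ℕ) (lam : Fin (k - 1) → ℂ) (t : ℝ) (z : ℂ) : ℝ :=
  -π * ∑ m ∈ Finset.range k, ‖wseq k lam t z m‖ ^ 2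

lemma wseq_affine (k : ℕ) (lam : Fin (k - 1) → ℂ) (t : ℝ) (m : ℕ) : ∃ c : ℂ, ∀ z,
    wseq k lam t z m = Complex.exp ((2 * (π : ℂ) * Complex.I) * (t : ℂ)) ^ m * z + c := by
  induction m with
  | zero => exact ⟨0, fun z => by simp [wseq]⟩
  | succ m ih =>
    obtain ⟨c, hc⟩ := ih
    refine ⟨Complex.exp ((2 * (π : ℂ) * Complex.I) * (t : ℂ)) * c -
      if h : k - (m + 1) - 1 < k - 1 then lam ⟨k - (m + 1) - 1, h⟩ else 0, fun z => ?_⟩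
    rw [wseq, hc z]
    ring

lemma conj_exp_rot (t : ℝ) :
    (starRingEnd ℂ) (Complex.exp ((2 * (π : ℂ) * Complex.I) * (t : ℂ))) =
      Complex.exp (-(2 * (π : ℂ) * Complex.I) * (t : ℂ)) := by
  rw [← Complex.exp_conj]
  simp [Complex.conj_ofNat]

lemma fderiv_normsq_affine (a c z : ℂ) :
    HasFDerivAt (fun z : ℂ => ‖a * z + c‖ ^ 2)
      (InnerProductSpace.toDual ℝ ℂ (2 * ((starRingEnd ℂ) a * (a * z + c)))) z := by
  have h1 : HasFDerivAt (fun z : ℂ => a * z + c)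
      (a • ContinuousLinearMap.id ℝ ℂ) z := by
    exact ((hasFDerivAt_id (𝕜 := ℝ) z).const_mul a).add_const c
  have h2 := h1.norm_sq
  refine h2.congr_fderiv ?_
  ext v <;> simp [Complex.inner] <;> ring

lemma hbar_gradient (k : ℕ) (lam : Fin (k - 1) → ℂ) (t : ℝ) (z : ℂ) :
    gradient (Hbar k lam t) z = -(2 * (π : ℂ)) * ∑ m ∈ Finset.range k,
      Complex.exp (-(2 * (π : ℂ) * Complex.I) * (t : ℂ)) ^ m * wseq k lam t z m := by
  apply HasGradientAt.gradient
  rw [hasGradientAt_iff_hasFDerivAt]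
  have h : ∀ m ∈ Finset.range k, HasFDerivAt (fun z : ℂ => ‖wseq k lam t z m‖ ^ 2)
      (InnerProductSpace.toDual ℝ ℂ (2 *
        (Complex.exp (-(2 * (π : ℂ) * Complex.I) * (t : ℂ)) ^ m * wseq k lam t z m))) z := by
    intro m _
    obtain ⟨c, hc⟩ := wseq_affine k lam t m
    have := fderiv_normsq_affine (Complex.exp ((2 * (π : ℂ) * Complex.I) * (t : ℂ)) ^ m) c z
    rw [map_pow, conj_exp_rot] at this
    simpa only [hc] using this
  have h3 := (HasFDerivAt.fun_sum h).const_mul (-π)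
  unfold Hbar
  refine h3.congr_fderiv ?_
  rw [← map_sum, ← Finset.mul_sum]
  ext v <;> simp [-Complex.re_sum, -Complex.im_sum, Complex.inner] <;> ring

lemma fseq_hasDerivAt (k : ℕ) (lam : Fin (k - 1) → ℂ) (z : ℂ) (t : ℝ) (m : ℕ) :
    HasDerivAt (fun s => Fseq k lam s m z)
      (-(2 * (π : ℂ) * Complex.I) * ∑ j ∈ Finset.range (m + 1),
        Complex.exp (-(2 * (π : ℂ) * Complex.I) * (t : ℂ)) ^ j * Fseq k lam t (m - j) z) t := by
  have hE : HasDerivAt (fun s : ℝ => Complex.exp (-(2 * (π : ℂ) * Complex.I) * (s : ℂ)))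
      (Complex.exp (-(2 * (π : ℂ) * Complex.I) * (t : ℂ)) * (-(2 * (π : ℂ) * Complex.I))) t := by
    have h := ((Complex.ofRealCLM.hasDerivAt (x := t)).const_mul (-(2 * (π : ℂ) * Complex.I))).cexp
    simpa using h
  induction m with
  | zero =>
    simp only [Fseq]
    refine (hE.mul_const z).congr_deriv ?_
    simp [Fseq]
    ring
  | succ m ih =>
    simp only [Fseq]
    refine (hE.mul (ih.add_const _)).congr_deriv ?_
    rw [Finset.sum_range_succ' _ (m + 1)]
    simp only [Nat.add_sub_add_right, pow_succ, pow_zero, Nat.sub_zero, Fseq]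
    have : ∀ S : ℂ, ∀ T : ℂ, T = Complex.exp (-(2 * (π : ℂ) * Complex.I) * (t : ℂ)) * S → 
      ∀ F : ℂ, Complex.exp (-(2 * (π : ℂ) * Complex.I) * (t : ℂ)) * (-(2 * (π : ℂ) * Complex.I)) * F
        + Complex.exp (-(2 * (π : ℂ) * Complex.I) * (t : ℂ)) * (-(2 * (π : ℂ) * Complex.I) * S)
        = -(2 * (π : ℂ) * Complex.I) * (T +
          1 * (Complex.exp (-(2 * (π : ℂ) * Complex.I) * (t : ℂ)) * F)) := by
      intro S T h F
      rw [h]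
      ring
    apply this
    rw [Finset.mul_sum]
    exact Finset.sum_congr rfl fun j _ => by ring

lemma wseq_fseq (k : ℕ) (lam : Fin (k - 1) → ℂ) (z : ℂ) (t : ℝ) (m : ℕ) (hm : m < k) :
    wseq k lam t (Fseq k lam t (k - 1) z) m = Fseq k lam t (k - 1 - m) z := by
  induction m with
  | zero => rfl
  | succ m ih =>
    rw [wseq, ih (by omega)]
    obtain ⟨n, hn⟩ : ∃ n, k = n + m + 2 := ⟨k - m - 2, by omega⟩
    have e1 : k - 1 - m = n + 1 := by omega
    have e2 : k - 1 - (m + 1) = n := by omega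
    have e3 : k - (m + 1) - 1 = n := by omega
    simp only [e1, e2, e3, Fseq]
    rw [← mul_assoc, ← Complex.exp_add]
    simp

lemma fseq_of_one (k : ℕ) (lam : Fin (k - 1) → ℂ) (t : ℝ)
    (ht : Complex.exp (-(2 * (π : ℂ) * Complex.I) * (t : ℂ)) = 1) (z : ℂ) (m : ℕ) :
    Fseq k lam t m z = z + ∑ j ∈ Finset.range m, if h : j < k - 1 then lam ⟨j, h⟩ else 0 := by
  induction m with
  | zero => rw [Fseq, ht]; simp
  | succ m ih => rw [Fseq, ih, ht, Finset.sum_range_succ]; ring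

lemma phibar_of_one (k : ℕ) (lam : Fin (k - 1) → ℂ) (t : ℝ)
    (ht : Complex.exp (-(2 * (π : ℂ) * Complex.I) * (t : ℂ)) = 1) (z : ℂ) :
    phibar k lam t z = z := by
  rw [phibar, fseq_of_one k lam t ht, ← Fin.sum_univ_eq_sum_range
    (fun j => if h : j < k - 1 then lam ⟨j, h⟩ else 0)]
  simp

lemma fseq_zero (k : ℕ) (lam : Fin (k - 1) → ℂ) (hl : ∀ j, lam j = 0) (t : ℝ) (z : ℂ) (m : ℕ) :
    Fseq k lam t m z = Complex.exp (-(2 * (π : ℂ) * Complex.I) * (t : ℂ)) ^ (m + 1) * z := by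
  induction m with
  | zero => simp [Fseq]
  | succ m ih => simp only [Fseq, ih, hl]; simp; ring

/-- for `k ≥ 2` and `λ ∈ ℂ^{k−1}`: (i) `φ̄ 0 = φ̄ 1 = id`;
(ii) for `λ = 0`, `φ̄ t z = exp(−2πi k t) z`; (iii) `φ̄` is a Hamiltonian flow of `H̄`. -/
theorem stmt_11 (k : ℕ) (hk : 2 ≤ k) (lam : Fin (k - 1) → ℂ) :
    (∀ z : ℂ, phibar k lam 0 z = z) ∧ (∀ z : ℂ, phibar k lam 1 z = z) ∧
    ((∀ j, lam j = 0) → ∀ (t : ℝ) (z : ℂ),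
      phibar k lam t z = Complex.exp (-(2 * (π : ℂ) * Complex.I) * ((k : ℂ) * (t : ℂ))) * z) ∧
    (∀ (z : ℂ) (t : ℝ),
      HasDerivAt (fun s => phibar k lam s z)
        (Complex.I * gradient (Hbar k lam t) (phibar k lam t z)) t) := by
  refine ⟨fun z => phibar_of_one k lam 0 (by simp) z, fun z => phibar_of_one k lam 1 ?_ z,
    fun hl t z => ?_, fun z t => ?_⟩
  · rw [Complex.ofReal_one, mul_one, Complex.exp_neg, Complex.exp_two_pi_mul_I, inv_one]
  · rw [phibar, fseq_zero k lam hl, ← Complex.exp_nat_mul]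
    have : k - 1 + 1 = k := by omega
    rw [this]
    simp only [hl, Finset.sum_const_zero, sub_zero]
    congr 2
    ring
  · refine (fseq_hasDerivAt k lam (z - ∑ j, lam j) t (k - 1)).congr_deriv ?_
    rw [hbar_gradient]
    have : k - 1 + 1 = k := by omega
    rw [this, ← mul_assoc]
    have h2 : ∀ m ∈ Finset.range k,
        Complex.exp (-(2 * (π : ℂ) * Complex.I) * (t : ℂ)) ^ m *
          wseq k lam t (phibar k lam t z) m =
        Complex.exp (-(2 * (π : ℂ) * Complex.I) * (t : ℂ)) ^ m *
          Fseq k lam t (k - 1 - m) (z - ∑ j, lam j) := by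
      intro m hm
      rw [phibar, wseq_fseq _ _ _ _ _ (Finset.mem_range.mp hm)]
    rw [Finset.sum_congr rfl h2]
    ring
end

section
/- Let a, b, c be positive integers, k = a + b + c, t ∈ ℝ and λ, μ ∈ ℂ. Then the function z ↦ a·|z|² + b·|exp(2πi·a·t)·z − λ|² + c·|exp(2πi·(a+b)·t)·z − exp(2πi·b·t)·λ − μ|² on ℂ attains a minimum, and its minimum value equals (a·(b+c)/k)·|λ|² + (c·(a+b)/k)·|μ|² + (2·a·c/k)·Re(exp(−2πi·b·t)·conj(λ)·μ). -/
open Real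

/-- Completing the square for three weighted squared distances. -/
lemma three_point (A B C : ℝ) (hk : A + B + C ≠ 0) (y l m : ℂ) :
    A * ‖y‖ ^ 2 + B * ‖y - l‖ ^ 2 + C * ‖y - l - m‖ ^ 2 =
      A * (B + C) / (A + B + C) * ‖l‖ ^ 2 + C * (A + B) / (A + B + C) * ‖m‖ ^ 2 +
        2 * A * C / (A + B + C) * ((starRingEnd ℂ) l * m).re +
        (A + B + C) * ‖y - (((B + C) / (A + B + C) : ℝ) * l + (C / (A + B + C) : ℝ) * m)‖ ^ 2 := by
  simp only [← Complex.normSq_eq_norm_sq, Complex.normSq_apply, Complex.sub_re, Complex.sub_im,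
    Complex.add_re, Complex.add_im, Complex.ofReal_re, Complex.ofReal_im, Complex.mul_im, Complex.mul_re,
    Complex.conj_re, Complex.conj_im]
  field_simp
  ring

/-- The same identity with unimodular twists. -/
lemma twisted (A B C : ℝ) (hk : A + B + C ≠ 0) (u v v' z l m : ℂ) (hu : ‖u‖ = 1) (hv : ‖v‖ = 1)
    (hvv : v * v' = 1) :
    A * ‖z‖ ^ 2 + B * ‖u * z - l‖ ^ 2 + C * ‖u * v * z - v * l - m‖ ^ 2 =
      A * (B + C) / (A + B + C) * ‖l‖ ^ 2 + C * (A + B) / (A + B + C) * ‖m‖ ^ 2 +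
        2 * A * C / (A + B + C) * (v' * (starRingEnd ℂ) l * m).re +
        (A + B + C) * ‖u * z - (((B + C) / (A + B + C) : ℝ) * l +
          (C / (A + B + C) : ℝ) * (v' * m))‖ ^ 2 := by
  have h := three_point A B C hk (u * z) l (v' * m)
  have hv' : ‖v'‖ = 1 := by
    have := congrArg norm hvv
    simpa [hv] using this
  have h1 : ‖u * v * z - v * l - m‖ = ‖u * z - l - v' * m‖ := by
    have : u * v * z - v * l - m = v * (u * z - l - v' * m) := by
      linear_combination m * hvv
    rw [this, norm_mul, hv, one_mul]
  have h2 : ‖u * z‖ = ‖z‖ := by rw [norm_mul, hu, one_mul]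
  have h3 : ‖v' * m‖ = ‖m‖ := by rw [norm_mul, hv', one_mul]
  have h4 : (starRingEnd ℂ) l * (v' * m) = v' * (starRingEnd ℂ) l * m := by ring
  rw [h2, h3, h4] at h
  rw [h1, h]

/-- for positive integers `a, b, c` with `k = a + b + c`, `t ∈ ℝ` and
`λ, μ ∈ ℂ`, the function
`z ↦ a|z|² + b|exp(2πi a t) z − λ|² + c|exp(2πi(a+b)t) z − exp(2πi b t) λ − μ|²`
attains a minimum on `ℂ`, whose value is
`(a(b+c)/k)|λ|² + (c(a+b)/k)|μ|² + (2ac/k) Re(exp(−2πi b t) conj(λ) μ)`. -/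
theorem stmt_13 (a b c : ℕ) (ha : 0 < a) (hb : 0 < b) (hc : 0 < c) (t : ℝ) (lam mu : ℂ) :
    ∃ z₀ : ℂ,
      (∀ z : ℂ,
        (a : ℝ) * ‖z₀‖ ^ 2 +
            (b : ℝ) * ‖Complex.exp ((2 * (π : ℂ) * Complex.I) * (a : ℂ) * (t : ℂ)) * z₀ - lam‖ ^ 2 +
            (c : ℝ) * ‖Complex.exp ((2 * (π : ℂ) * Complex.I) * ((a : ℂ) + (b : ℂ)) * (t : ℂ)) * z₀ -
              Complex.exp ((2 * (π : ℂ) * Complex.I) * (b : ℂ) * (t : ℂ)) * lam - mu‖ ^ 2 ≤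
          (a : ℝ) * ‖z‖ ^ 2 +
            (b : ℝ) * ‖Complex.exp ((2 * (π : ℂ) * Complex.I) * (a : ℂ) * (t : ℂ)) * z - lam‖ ^ 2 +
            (c : ℝ) * ‖Complex.exp ((2 * (π : ℂ) * Complex.I) * ((a : ℂ) + (b : ℂ)) * (t : ℂ)) * z -
              Complex.exp ((2 * (π : ℂ) * Complex.I) * (b : ℂ) * (t : ℂ)) * lam - mu‖ ^ 2) ∧
      (a : ℝ) * ‖z₀‖ ^ 2 +
          (b : ℝ) * ‖Complex.exp ((2 * (π : ℂ) * Complex.I) * (a : ℂ) * (t : ℂ)) * z₀ - lam‖ ^ 2 +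
          (c : ℝ) * ‖Complex.exp ((2 * (π : ℂ) * Complex.I) * ((a : ℂ) + (b : ℂ)) * (t : ℂ)) * z₀ -
            Complex.exp ((2 * (π : ℂ) * Complex.I) * (b : ℂ) * (t : ℂ)) * lam - mu‖ ^ 2 =
        (a : ℝ) * ((b : ℝ) + (c : ℝ)) / ((a : ℝ) + (b : ℝ) + (c : ℝ)) * ‖lam‖ ^ 2 +
          (c : ℝ) * ((a : ℝ) + (b : ℝ)) / ((a : ℝ) + (b : ℝ) + (c : ℝ)) * ‖mu‖ ^ 2 +
          2 * (a : ℝ) * (c : ℝ) / ((a : ℝ) + (b : ℝ) + (c : ℝ)) *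
            (Complex.exp (-(2 * (π : ℂ) * Complex.I) * (b : ℂ) * (t : ℂ)) *
              (starRingEnd ℂ) lam * mu).re := by
  have hk : (0 : ℝ) < (a : ℝ) + b + c := by positivity
  have hn : ∀ n : ℕ, ‖Complex.exp ((2 * (π : ℂ) * Complex.I) * (n : ℂ) * (t : ℂ))‖ = 1 := by
    intro n
    have : (2 * (π : ℂ) * Complex.I) * (n : ℂ) * (t : ℂ)
        = ((2 * π * n * t : ℝ) : ℂ) * Complex.I := by push_cast; ring
    rw [this, Complex.norm_exp_ofReal_mul_I]
  have hadd : Complex.exp ((2 * (π : ℂ) * Complex.I) * ((a : ℂ) + (b : ℂ)) * (t : ℂ)) =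
      Complex.exp ((2 * (π : ℂ) * Complex.I) * (a : ℂ) * (t : ℂ)) *
      Complex.exp ((2 * (π : ℂ) * Complex.I) * (b : ℂ) * (t : ℂ)) := by
    rw [← Complex.exp_add]; congr 1; ring
  have hvv : Complex.exp ((2 * (π : ℂ) * Complex.I) * (b : ℂ) * (t : ℂ)) *
      Complex.exp (-(2 * (π : ℂ) * Complex.I) * (b : ℂ) * (t : ℂ)) = 1 := by
    rw [← Complex.exp_add, ← Complex.exp_zero]; congr 1; ring
  have hu0 : Complex.exp ((2 * (π : ℂ) * Complex.I) * (a : ℂ) * (t : ℂ)) ≠ 0 :=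
    Complex.exp_ne_zero _
  have hu := hn a
  have hv := hn b
  rw [hadd]
  generalize Complex.exp ((2 * (π : ℂ) * Complex.I) * (a : ℂ) * (t : ℂ)) = u at *
  generalize Complex.exp ((2 * (π : ℂ) * Complex.I) * (b : ℂ) * (t : ℂ)) = v at *
  generalize Complex.exp (-(2 * (π : ℂ) * Complex.I) * (b : ℂ) * (t : ℂ)) = v' at *
  have key := fun z => twisted a b c hk.ne' u v v' z lam mu hu hv hvv
  refine ⟨u⁻¹ * ((((b : ℝ) + c) / ((a : ℝ) + b + c) : ℝ) * lam +
          ((c : ℝ) / ((a : ℝ) + b + c) : ℝ) * (v' * mu)), ?_, ?_⟩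
  · intro z
    rw [key, key z, mul_inv_cancel_left₀ hu0, sub_self, norm_zero]
    have := mul_nonneg hk.le (sq_nonneg ‖u * z - (((((b : ℝ) + c) / ((a : ℝ) + b + c) : ℝ) : ℂ) * lam +
          (((c : ℝ) / ((a : ℝ) + b + c) : ℝ) : ℂ) * (v' * mu))‖)
    linarith
  · rw [key, mul_inv_cancel_left₀ hu0, sub_self, norm_zero]
    ring
end

section
/- Let a, b, c be positive integers, k = a + b + c, and λ, μ ∈ ℂ. For t ∈ ℝ let m(t) denote the infimum over z ∈ ℂ of a·|z|² + b·|exp(2πi·a·t)·z − λ|² + c·|exp(2πi·(a+b)·t)·z − exp(2πi·b·t)·λ − μ|². Then ∫₀¹ m(t) dt = (a·(b+c)/k)·|λ|² + (c·(a+b)/k)·|μ|², i.e. equivalently (b+c)·(1 − (b+c)/k)·|λ|² + c·(1 − c/k)·|μ|². -/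
open Real

lemma aux_id (a b c : ℝ) (hk : a + b + c ≠ 0) (u l q : ℂ) :
    a * ‖u‖ ^ 2 + b * ‖u - l‖ ^ 2 + c * ‖u - q‖ ^ 2 =
      (a + b + c) * ‖u - ((b / (a + b + c) : ℝ) * l + (c / (a + b + c) : ℝ) * q)‖ ^ 2 +
      (a * b * ‖l‖ ^ 2 + a * c * ‖q‖ ^ 2 + b * c * ‖q - l‖ ^ 2) / (a + b + c) := by
  simp only [← Complex.normSq_eq_norm_sq, Complex.normSq_apply, Complex.sub_re, Complex.sub_im,
    Complex.add_re, Complex.add_im, Complex.re_ofReal_mul, Complex.im_ofReal_mul]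
  field_simp
  ring

lemma aux_inf (a b c : ℝ) (ha : 0 < a) (hb : 0 < b) (hc : 0 < c) (E F l mu : ℂ)
    (hE : ‖E‖ = 1) (hF : ‖F‖ = 1) :
    (⨅ z : ℂ, (a * ‖z‖ ^ 2 + b * ‖E * z - l‖ ^ 2 + c * ‖E * F * z - F * l - mu‖ ^ 2)) =
      (a * b * ‖l‖ ^ 2 + a * c * ‖F * l + mu‖ ^ 2 + b * c * ‖mu‖ ^ 2) / (a + b + c) := by
  have hE0 : E ≠ 0 := by rintro rfl; simp at hE
  have hF0 : F ≠ 0 := by rintro rfl; simp at hF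
  have hk : 0 < a + b + c := by positivity
  have key : ∀ z : ℂ, a * ‖z‖ ^ 2 + b * ‖E * z - l‖ ^ 2 + c * ‖E * F * z - F * l - mu‖ ^ 2 =
      (a + b + c) * ‖E * z - ((b / (a + b + c) : ℝ) * l +
        (c / (a + b + c) : ℝ) * (l + mu / F))‖ ^ 2 +
      (a * b * ‖l‖ ^ 2 + a * c * ‖F * l + mu‖ ^ 2 + b * c * ‖mu‖ ^ 2) / (a + b + c) := by
    intro z
    have h := aux_id a b c hk.ne' (E * z) l (l + mu / F)
    have h1 : ‖E * z‖ = ‖z‖ := by simp [hE]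
    have h2 : ‖E * z - (l + mu / F)‖ = ‖E * F * z - F * l - mu‖ := by
      have : E * F * z - F * l - mu = F * (E * z - (l + mu / F)) := by field_simp; ring
      rw [this, norm_mul, hF, one_mul]
    have h3 : ‖l + mu / F‖ = ‖F * l + mu‖ := by
      have : F * l + mu = F * (l + mu / F) := by field_simp
      rw [this, norm_mul, hF, one_mul]
    have h4 : ‖l + mu / F - l‖ = ‖mu‖ := by simp [hF]
    rw [h1, h2, h3, h4] at h
    exact h
  simp_rw [key]
  apply le_antisymm
  · refine (ciInf_le ⟨0, ?_⟩ (((b / (a + b + c) : ℝ) * l +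
        (c / (a + b + c) : ℝ) * (l + mu / F)) / E)).trans ?_
    · rintro _ ⟨z, rfl⟩
      positivity
    · rw [mul_div_cancel₀ _ hE0]
      simp
  · refine le_ciInf fun z => ?_
    have : 0 ≤ (a + b + c) * ‖E * z - ((b / (a + b + c) : ℝ) * l +
        (c / (a + b + c) : ℝ) * (l + mu / F))‖ ^ 2 := by positivity
    linarith

lemma aux_norm (s : ℝ) (l mu : ℂ) : ‖Complex.exp (s * Complex.I) * l + mu‖ ^ 2 =
    ‖l‖ ^ 2 + ‖mu‖ ^ 2 + (2 * (l.re * mu.re + l.im * mu.im) * Real.cos s +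
      2 * (l.re * mu.im - l.im * mu.re) * Real.sin s) := by
  simp only [← Complex.normSq_eq_norm_sq, Complex.normSq_apply, Complex.add_re, Complex.add_im,
    Complex.mul_re, Complex.mul_im, Complex.exp_ofReal_mul_I_re, Complex.exp_ofReal_mul_I_im]
  linear_combination (l.re ^ 2 + l.im ^ 2) * Real.sin_sq_add_cos_sq s

/-- with `a, b, c` positive integers, `k = a + b + c` and `λ, μ ∈ ℂ`, letting
`m t` be the infimum over `z ∈ ℂ` of
`a|z|² + b|exp(2πi a t) z − λ|² + c|exp(2πi(a+b)t) z − exp(2πi b t) λ − μ|²`, one has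
`∫₀¹ m t dt = (a(b+c)/k)|λ|² + (c(a+b)/k)|μ|²`, equivalently
`(b+c)(1 − (b+c)/k)|λ|² + c(1 − c/k)|μ|²`. -/
theorem stmt_14 (a b c : ℕ) (ha : 0 < a) (hb : 0 < b) (hc : 0 < c) (lam mu : ℂ)
    (m : ℝ → ℝ)
    (hm : ∀ t : ℝ, m t = ⨅ z : ℂ,
      ((a : ℝ) * ‖z‖ ^ 2 +
        (b : ℝ) * ‖Complex.exp ((2 * (π : ℂ) * Complex.I) * (a : ℂ) * (t : ℂ)) * z - lam‖ ^ 2 +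
        (c : ℝ) * ‖Complex.exp ((2 * (π : ℂ) * Complex.I) * ((a : ℂ) + (b : ℂ)) * (t : ℂ)) * z -
          Complex.exp ((2 * (π : ℂ) * Complex.I) * (b : ℂ) * (t : ℂ)) * lam - mu‖ ^ 2)) :
    (∫ t in (0 : ℝ)..1, m t) =
      (a : ℝ) * ((b : ℝ) + (c : ℝ)) / ((a : ℝ) + (b : ℝ) + (c : ℝ)) * ‖lam‖ ^ 2 +
        (c : ℝ) * ((a : ℝ) + (b : ℝ)) / ((a : ℝ) + (b : ℝ) + (c : ℝ)) * ‖mu‖ ^ 2 ∧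
    (a : ℝ) * ((b : ℝ) + (c : ℝ)) / ((a : ℝ) + (b : ℝ) + (c : ℝ)) * ‖lam‖ ^ 2 +
        (c : ℝ) * ((a : ℝ) + (b : ℝ)) / ((a : ℝ) + (b : ℝ) + (c : ℝ)) * ‖mu‖ ^ 2 =
      ((b : ℝ) + (c : ℝ)) * (1 - ((b : ℝ) + (c : ℝ)) / ((a : ℝ) + (b : ℝ) + (c : ℝ))) * ‖lam‖ ^ 2 +
        (c : ℝ) * (1 - (c : ℝ) / ((a : ℝ) + (b : ℝ) + (c : ℝ))) * ‖mu‖ ^ 2 := by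
  have ha' : (0:ℝ) < a := by exact_mod_cast ha
  have hb' : (0:ℝ) < b := by exact_mod_cast hb
  have hc' : (0:ℝ) < c := by exact_mod_cast hc
  refine ⟨?_, by field_simp; ring⟩
  have hmt : ∀ t, m t = ((a:ℝ) * b * ‖lam‖ ^ 2 + a * c * (‖lam‖ ^ 2 + ‖mu‖ ^ 2) +
      b * c * ‖mu‖ ^ 2) / (a + b + c) +
      (a * c / (a + b + c) * (2 * (lam.re * mu.re + lam.im * mu.im)) * Real.cos ((2 * π * b) * t) +
      a * c / (a + b + c) * (2 * (lam.re * mu.im - lam.im * mu.re)) *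
        Real.sin ((2 * π * b) * t)) := by
    intro t
    have e1 : (2 * (π : ℂ) * Complex.I) * (a : ℂ) * (t : ℂ) =
      ((2 * π * a * t : ℝ) : ℂ) * Complex.I := by push_cast; ring
    have e2 : (2 * (π : ℂ) * Complex.I) * (b : ℂ) * (t : ℂ) =
      ((2 * π * b * t : ℝ) : ℂ) * Complex.I := by push_cast; ring
    have e3 : (2 * (π : ℂ) * Complex.I) * ((a : ℂ) + (b : ℂ)) * (t : ℂ) =
      ((2 * π * a * t : ℝ) : ℂ) * Complex.I + ((2 * π * b * t : ℝ) : ℂ) * Complex.I := by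
      push_cast; ring
    rw [hm t, e1, e2, e3, Complex.exp_add,
      aux_inf a b c ha' hb' hc' _ _ lam mu (Complex.norm_exp_ofReal_mul_I _)
        (Complex.norm_exp_ofReal_mul_I _), aux_norm]
    field_simp
    ring
  have hw : 2 * π * (b:ℝ) ≠ 0 := by positivity
  have hcos : ∫ t in (0:ℝ)..1, Real.cos ((2 * π * b) * t) = 0 := by
    rw [intervalIntegral.integral_comp_mul_left (fun x => Real.cos x) hw, integral_cos]
    have : Real.sin (2 * π * b * 1) = 0 := by
      have := Real.sin_nat_mul_pi (2 * b)
      rw [← this]; push_cast; ring_nf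
    rw [this]; simp
  have hsin : ∫ t in (0:ℝ)..1, Real.sin ((2 * π * b) * t) = 0 := by
    rw [intervalIntegral.integral_comp_mul_left (fun x => Real.sin x) hw, integral_sin]
    have : Real.cos (2 * π * b * 1) = 1 := by
      have := Real.cos_nat_mul_two_pi b
      rwa [show 2 * π * (b:ℝ) * 1 = b * (2 * π) by ring]
    rw [this]; simp
  simp_rw [hmt]
  rw [intervalIntegral.integral_add (Continuous.intervalIntegrable (by fun_prop) _ _)
      (Continuous.intervalIntegrable (by fun_prop) _ _),
    intervalIntegral.integral_add (Continuous.intervalIntegrable (by fun_prop) _ _)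
      (Continuous.intervalIntegrable (by fun_prop) _ _),
    intervalIntegral.integral_const_mul, intervalIntegral.integral_const_mul, hcos, hsin,
    intervalIntegral.integral_const]
  simp only [smul_eq_mul]
  field_simp
  ring
end

section
/- Let k ≥ 2 be an integer. For λ = (λ₁, …, λ_{k−1}) ∈ ℂ^{k−1}, t ∈ ℝ and z ∈ ℂ define w₀(t, λ, z) = z and w_m(t, λ, z) = exp(2πi·t)·w_{m−1}(t, λ, z) − λ_{k−m} for 1 ≤ m ≤ k−1, and set Q(t, λ, z) = Σ_{m=0}^{k−1} |w_m(t, λ, z)|². Define Φ : ℂ^{k−1} → ℝ by Φ(λ) = ∫₀¹ (inf over z ∈ ℂ of Q(t, λ, z)) dt. Then: (i) Φ is infinitely differentiable (as a function on ℂ^{k−1} ≅ ℝ^{2(k−1)}); (ii) Φ(0) = 0 and Φ(λ) ≥ 0 for all λ; (iii) the second derivative (Hessian) of Φ at the origin is the quadratic form v ↦ 2·Σ_{j=1}^{k−1} (j·(k−j)/k)·|v_j|², and in particular it is positive definite. -/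
open Real

/-- `Q(t, λ, z) = Σ_{m=0}^{k−1} |w_m(t, λ, z)|²`. -/
noncomputable def Q (k : ℕ) (t : ℝ) (lam : Fin (k - 1) → ℂ) (z : ℂ) : ℝ :=
  ∑ m ∈ Finset.range k, ‖wseq k lam t z m‖ ^ 2

/-- `Φ(λ) = ∫₀¹ (inf over z ∈ ℂ of Q(t, λ, z)) dt`. -/
noncomputable def Phi (k : ℕ) (lam : Fin (k - 1) → ℂ) : ℝ :=
  ∫ t in (0 : ℝ)..1, ⨅ z : ℂ, Q k t lam z

noncomputable def EE (t : ℝ) : ℂ := Complex.exp ((2 * (π : ℂ) * Complex.I) * (t : ℂ))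

lemma EE_ne (t : ℝ) : EE t ≠ 0 := Complex.exp_ne_zero _

lemma EE_norm (t : ℝ) : ‖EE t‖ = 1 := by
  have : EE t = Complex.exp ((2 * π * t : ℝ) * Complex.I) := by
    unfold EE; congr 1; push_cast; ring
  rw [this, Complex.norm_exp_ofReal_mul_I]

lemma EE_conj (t : ℝ) : (starRingEnd ℂ) (EE t) = (EE t)⁻¹ := by
  rw [Complex.inv_def, Complex.normSq_eq_norm_sq, EE_norm]; simp

lemma EE_cont : Continuous EE := by unfold EE; fun_prop

lemma EE_zpow_int (n : ℤ) : ∫ t in (0 : ℝ)..1, (EE t) ^ n = if n = 0 then 1 else 0 := by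
  split_ifs with h
  · simp [h]
  · have hc : (2 * (π : ℂ) * Complex.I * n) ≠ 0 := by
      simp [Real.pi_ne_zero, h]
    have : ∀ t : ℝ, EE t ^ n = Complex.exp ((2 * (π : ℂ) * Complex.I * n) * t) := by
      intro t; unfold EE; rw [← Complex.exp_int_mul]; congr 1; ring
    simp_rw [this]
    rw [integral_exp_mul_complex hc]
    have h1 : Complex.exp (2 * (π : ℂ) * Complex.I * n) = 1 := by
      rw [Complex.exp_eq_one_iff]; exact ⟨n, by ring⟩
    simp [h1]

lemma trig_cont (n : ℕ) (c : ℕ → ℂ) :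
    Continuous fun t : ℝ => ∑ l ∈ Finset.range n, (EE t)⁻¹ ^ (l + 1) * c l := by
  have h : Continuous fun t => (EE t)⁻¹ := EE_cont.inv₀ EE_ne
  fun_prop

lemma parseval (n : ℕ) (c : ℕ → ℂ) :
    ∫ t in (0 : ℝ)..1, ‖∑ l ∈ Finset.range n, (EE t)⁻¹ ^ (l + 1) * c l‖ ^ 2
      = ∑ l ∈ Finset.range n, ‖c l‖ ^ 2 := by
  have key : ∀ t : ℝ, ((‖∑ l ∈ Finset.range n, (EE t)⁻¹ ^ (l + 1) * c l‖ ^ 2 : ℝ) : ℂ)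
      = ∑ l ∈ Finset.range n, ∑ l' ∈ Finset.range n,
          (c l * (starRingEnd ℂ) (c l')) * (EE t) ^ ((l' : ℤ) - l) := by
    intro t
    push_cast
    rw [← Complex.mul_conj', map_sum, Finset.sum_mul_sum]
    refine Finset.sum_congr rfl fun l _ => Finset.sum_congr rfl fun l' _ => ?_
    rw [map_mul, map_pow, map_inv₀, EE_conj, inv_inv, zpow_sub₀ (EE_ne t)]
    have := EE_ne t
    simp only [zpow_natCast]
    rw [pow_succ (EE t)⁻¹, pow_succ (EE t), inv_pow]
    field_simp
  have hz : ∀ m : ℤ, Continuous fun t => EE t ^ m := fun m =>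
    EE_cont.zpow₀ m (fun t => Or.inl (EE_ne t))
  apply Complex.ofReal_injective
  rw [← intervalIntegral.integral_ofReal]
  simp_rw [key]
  rw [intervalIntegral.integral_finsetSum]
  · push_cast
    refine Finset.sum_congr rfl fun l hl => ?_
    rw [intervalIntegral.integral_finsetSum]
    · simp_rw [intervalIntegral.integral_const_mul, EE_zpow_int]
      rw [Finset.sum_eq_single l]
      · simp [Complex.mul_conj']
      · intro b _ hb
        have : (b : ℤ) - l ≠ 0 := by omega
        simp [this]
      · intro h; exact absurd hl h
    · intro i _
      exact (continuous_const.mul (hz _)).intervalIntegrable _ _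
  · intro i _
    exact (continuous_finsetSum _ fun j _ => continuous_const.mul (hz _)).intervalIntegrable _ _

noncomputable def dd (k : ℕ) (lam : Fin (k - 1) → ℂ) (m : ℕ) : ℂ :=
  if h : k - (m + 1) - 1 < k - 1 then lam ⟨k - (m + 1) - 1, h⟩ else 0

noncomputable def aa (k : ℕ) (lam : Fin (k - 1) → ℂ) (t : ℝ) (m : ℕ) : ℂ :=
  ∑ l ∈ Finset.range m, (EE t)⁻¹ ^ (l + 1) * dd k lam l

lemma wseq_eq (k : ℕ) (lam : Fin (k - 1) → ℂ) (t : ℝ) (z : ℂ) (m : ℕ) :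
    wseq k lam t z m = EE t ^ m * (z - aa k lam t m) := by
  induction m with
  | zero => simp [wseq, aa]
  | succ m ih =>
    have h : wseq k lam t z (m + 1) = EE t * wseq k lam t z m - dd k lam m := rfl
    have h2 : aa k lam t (m + 1) = aa k lam t m + (EE t)⁻¹ ^ (m + 1) * dd k lam m := by
      unfold aa; rw [Finset.sum_range_succ]
    rw [h, ih, h2]
    have h3 : EE t ^ (m + 1) * (EE t)⁻¹ ^ (m + 1) = 1 := by
      rw [← mul_pow, mul_inv_cancel₀ (EE_ne t), one_pow]
    linear_combination (dd k lam m) * h3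

lemma sum_sq (k : ℕ) (hk : 0 < k) (a : ℕ → ℂ) (z : ℂ) :
    ∑ m ∈ Finset.range k, ‖z - a m‖ ^ 2 =
      k * ‖z - (∑ m ∈ Finset.range k, a m) / k‖ ^ 2 +
      (∑ m ∈ Finset.range k, ‖a m‖ ^ 2 - ‖∑ m ∈ Finset.range k, a m‖ ^ 2 / k) := by
  have hk' : (k : ℂ) ≠ 0 := by exact_mod_cast hk.ne'
  apply Complex.ofReal_injective
  push_cast
  simp only [← Complex.mul_conj', map_sub, map_div₀, Complex.conj_natCast]
  have hcs : ∑ x ∈ Finset.range k, (starRingEnd ℂ) z * a x =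
      (starRingEnd ℂ) z * ∑ x ∈ Finset.range k, a x := by rw [Finset.mul_sum]
  have hcs' : ∑ x ∈ Finset.range k, z * (starRingEnd ℂ) (a x) =
      z * ∑ x ∈ Finset.range k, (starRingEnd ℂ) (a x) := by rw [Finset.mul_sum]
  have : ∀ m, (z - a m) * ((starRingEnd ℂ) z - (starRingEnd ℂ) (a m)) =
    z * (starRingEnd ℂ) z - z * (starRingEnd ℂ) (a m) - (starRingEnd ℂ) z * a m
      + a m * (starRingEnd ℂ) (a m) := by intro m; ring
  simp_rw [this]
  rw [Finset.sum_add_distrib, Finset.sum_sub_distrib, Finset.sum_sub_distrib, hcs', hcs, map_sum]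
  simp only [Finset.sum_const, Finset.card_range, nsmul_eq_mul]
  field_simp
  ring

lemma inf_Q (k : ℕ) (hk : 0 < k) (lam : Fin (k - 1) → ℂ) (t : ℝ) :
    ⨅ z : ℂ, Q k t lam z = ∑ m ∈ Finset.range k, ‖aa k lam t m‖ ^ 2 -
      ‖∑ m ∈ Finset.range k, aa k lam t m‖ ^ 2 / k := by
  have h : ∀ z, Q k t lam z = k * ‖z - (∑ m ∈ Finset.range k, aa k lam t m) / k‖ ^ 2 +
      (∑ m ∈ Finset.range k, ‖aa k lam t m‖ ^ 2 -
        ‖∑ m ∈ Finset.range k, aa k lam t m‖ ^ 2 / k) := by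
    intro z
    rw [← sum_sq k hk]
    unfold Q
    simp [wseq_eq, EE_norm]
  simp_rw [h]
  apply le_antisymm
  · refine (ciInf_le ⟨∑ m ∈ Finset.range k, ‖aa k lam t m‖ ^ 2 -
        ‖∑ m ∈ Finset.range k, aa k lam t m‖ ^ 2 / k, ?_⟩ ((∑ m ∈ Finset.range k, aa k lam t m) / k)).trans ?_
    · rintro _ ⟨z, rfl⟩
      simp only [le_add_iff_nonneg_left]
      positivity
    · simp
  · refine le_ciInf fun z => ?_
    simp only [le_add_iff_nonneg_left]
    positivity

lemma sum_aa (k : ℕ) (lam : Fin (k - 1) → ℂ) (t : ℝ) :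
    ∑ m ∈ Finset.range k, aa k lam t m =
      ∑ l ∈ Finset.range (k - 1), (EE t)⁻¹ ^ (l + 1) * (((k - 1 - l : ℕ) : ℂ) * dd k lam l) := by
  unfold aa
  rw [Finset.sum_comm' (t' := Finset.range (k - 1)) (s' := fun l => Finset.Ico (l + 1) k)]
  · refine Finset.sum_congr rfl fun l _ => ?_
    rw [Finset.sum_const, Nat.card_Ico, nsmul_eq_mul, show k - (l + 1) = k - 1 - l by omega]
    ring
  · intro x y; simp only [Finset.mem_range, Finset.mem_Ico]; omega

lemma Phi_eq (k : ℕ) (hk : 2 ≤ k) (lam : Fin (k - 1) → ℂ) :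
    Phi k lam = ∑ j : Fin (k - 1),
          ((j.val + 1 : ℝ) * ((k : ℝ) - (j.val + 1 : ℝ)) / (k : ℝ)) * ‖lam j‖ ^ 2 := by
  unfold Phi
  simp_rw [inf_Q k (by omega), sum_aa]
  have hc : ∀ (n : ℕ) (c : ℕ → ℂ), IntervalIntegrable
      (fun t : ℝ => ‖∑ l ∈ Finset.range n, (EE t)⁻¹ ^ (l + 1) * c l‖ ^ 2)
      MeasureTheory.volume 0 1 := fun n c =>
    ((trig_cont n c).norm.pow 2).intervalIntegrable _ _
  rw [intervalIntegral.integral_sub, intervalIntegral.integral_finsetSum,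
    intervalIntegral.integral_div, parseval]
  rotate_left
  · intro i _; exact hc _ _
  · exact (continuous_finsetSum _ fun i _ =>
      ((trig_cont i (dd k lam)).norm.pow 2)).intervalIntegrable _ _
  · exact (hc _ _).div_const _
  unfold aa
  simp_rw [parseval]
  rw [Finset.sum_comm' (t' := Finset.range (k - 1)) (s' := fun l => Finset.Ico (l + 1) k)
    (by intro x y; simp only [Finset.mem_range, Finset.mem_Ico]; omega)]
  rw [Finset.sum_div, ← Finset.sum_sub_distrib]
  have hk' : (k : ℝ) ≠ 0 := by positivity
  have : ∀ j : Fin (k - 1), ((j.val + 1 : ℝ) * ((k : ℝ) - (j.val + 1 : ℝ)) / (k : ℝ)) * ‖lam j‖ ^ 2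
      = (fun i : ℕ => ((i + 1 : ℝ) * ((k : ℝ) - (i + 1 : ℝ)) / (k : ℝ)) *
        ‖(if h : i < k - 1 then lam ⟨i, h⟩ else 0)‖ ^ 2) j.val := by
    intro j; simp
  rw [Finset.sum_congr rfl (fun j _ => this j), Fin.sum_univ_eq_sum_range
    (fun i : ℕ => ((i + 1 : ℝ) * ((k : ℝ) - (i + 1 : ℝ)) / (k : ℝ)) *
        ‖(if h : i < k - 1 then lam ⟨i, h⟩ else 0)‖ ^ 2)]
  refine Eq.trans ?_ (Finset.sum_range_reflect _ _)
  refine Finset.sum_congr rfl fun l hl => ?_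
  rw [Finset.mem_range] at hl
  rw [Finset.sum_const, Nat.card_Ico, nsmul_eq_mul]
  unfold dd
  have e : k - 1 - 1 - l = k - (l + 1) - 1 := by omega
  rw [e]
  obtain ⟨p, hp⟩ : ∃ p, k = l + 2 + p := ⟨k - (l + 2), by omega⟩
  have e1 : ((k - (l + 1) - 1 : ℕ) : ℝ) = p := by congr 1; omega
  have e2 : ((k - (l + 1) : ℕ) : ℝ) = p + 1 := by
    rw [show k - (l + 1) = p + 1 by omega]; push_cast; ring
  have e3 : ((k - 1 - l : ℕ) : ℂ) = ((p + 1 : ℕ) : ℂ) := by congr 1; omega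
  rw [e1, e2, e3, norm_mul, Complex.norm_natCast]
  push_cast
  field_simp

noncomputable def BB (k : ℕ) : (Fin (k - 1) → ℂ) →L[ℝ] (Fin (k - 1) → ℂ) →L[ℝ] ℝ :=
  ∑ j : Fin (k - 1), ((j.val + 1 : ℝ) * ((k : ℝ) - (j.val + 1 : ℝ)) / (k : ℝ)) •
    (innerSL ℝ (E := ℂ)).bilinearComp (ContinuousLinearMap.proj (R := ℝ) j)
      (ContinuousLinearMap.proj (R := ℝ) j)

lemma BB_apply (k : ℕ) (v : Fin (k - 1) → ℂ) : BB k v v = ∑ j : Fin (k - 1),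
          ((j.val + 1 : ℝ) * ((k : ℝ) - (j.val + 1 : ℝ)) / (k : ℝ)) * ‖v j‖ ^ 2 := by
  unfold BB
  simp only [ContinuousLinearMap.sum_apply, ContinuousLinearMap.smul_apply,
    ContinuousLinearMap.bilinearComp_apply, ContinuousLinearMap.proj_apply, innerSL_apply_apply,
    real_inner_self_eq_norm_sq, smul_eq_mul]

lemma Phi_BB (k : ℕ) (hk : 2 ≤ k) : Phi k = fun v => BB k v v := by
  funext v; rw [Phi_eq k hk, BB_apply]

lemma hess (k : ℕ) (hk : 2 ≤ k) (v : Fin (k - 1) → ℂ) :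
    iteratedFDeriv ℝ 2 (Phi k) 0 ![v, v] = 2 * ∑ j : Fin (k - 1),
          ((j.val + 1 : ℝ) * ((k : ℝ) - (j.val + 1 : ℝ)) / (k : ℝ)) * ‖v j‖ ^ 2 := by
  rw [iteratedFDeriv_two_apply, Phi_BB k hk]
  have h : fderiv ℝ (fun v => BB k v v) = fun x => (BB k + (BB k).flip) x := by
    funext x
    have : HasFDerivAt (fun v => BB k v v) _ x := (BB k).hasFDerivAt_of_bilinear (hasFDerivAt_id x) (hasFDerivAt_id x)
    rw [HasFDerivAt.fderiv this]
    ext y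
    simp [ContinuousLinearMap.precompR, ContinuousLinearMap.precompL]
  rw [h, ContinuousLinearMap.fderiv]
  simp only [Matrix.cons_val_zero, Matrix.cons_val_one, ContinuousLinearMap.add_apply,
    ContinuousLinearMap.flip_apply, BB_apply]
  ring

lemma coef_pos (k : ℕ) (j : Fin (k - 1)) :
    0 < (j.val + 1 : ℝ) * ((k : ℝ) - (j.val + 1 : ℝ)) / (k : ℝ) := by
  have h : j.val + 1 < k := by omega
  have h' : (j.val + 1 : ℝ) < k := by exact_mod_cast h
  have : (0 : ℝ) < j.val + 1 := by positivity
  exact div_pos (mul_pos this (by linarith)) (by linarith)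

/-- for `k ≥ 2`: (i) `Φ` is infinitely differentiable on `ℂ^{k−1} ≅ ℝ^{2(k−1)}`;
(ii) `Φ(0) = 0` and `Φ ≥ 0`; (iii) the Hessian of `Φ` at the origin is the quadratic form
`v ↦ 2 Σ_{j=1}^{k−1} (j(k−j)/k)|v_j|²`, and in particular it is positive definite. -/
theorem stmt_15 (k : ℕ) (hk : 2 ≤ k) :
    ContDiff ℝ (⊤ : ℕ∞) (Phi k) ∧
    Phi k 0 = 0 ∧ (∀ lam : Fin (k - 1) → ℂ, 0 ≤ Phi k lam) ∧
    (∀ v : Fin (k - 1) → ℂ,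
      iteratedFDeriv ℝ 2 (Phi k) 0 ![v, v] =
        2 * ∑ j : Fin (k - 1),
          ((j.val + 1 : ℝ) * ((k : ℝ) - (j.val + 1 : ℝ)) / (k : ℝ)) * ‖v j‖ ^ 2) ∧
    (∀ v : Fin (k - 1) → ℂ, v ≠ 0 → 0 < iteratedFDeriv ℝ 2 (Phi k) 0 ![v, v]) := by
  refine ⟨?_, ?_, ?_, hess k hk, ?_⟩
  · rw [Phi_BB k hk]
    fun_prop
  · rw [Phi_BB k hk]; simp
  · intro lam
    rw [Phi_eq k hk]
    exact Finset.sum_nonneg fun j _ => mul_nonneg (coef_pos k j).le (by positivity)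
  · intro v hv
    rw [hess k hk]
    obtain ⟨j, hj⟩ := Function.ne_iff.mp hv
    refine mul_pos two_pos (Finset.sum_pos' (fun j _ =>
      mul_nonneg (coef_pos k j).le (by positivity)) ⟨j, Finset.mem_univ _, ?_⟩)
    exact mul_pos (coef_pos k j) (pow_pos (norm_pos_iff.mpr hj) 2)
end
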